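/- arXiv:1311.3725 — 2 statements merged into one kernel-verified Lean document; each statement's English description precedes it below -/
import Mathlib

section
/- Let π₁, π₂, π₃ : ℝ² → ℝ be surjective linear maps that are pairwise linearly independent, and for each j let v_j ∈ ℝ² be a unit vector spanning ker π_j. Let a : ℝ² → ℝ be a smooth compactly supported function and let S : ℝ² → ℝ be smooth. Suppose that |D_{π⊥}S(x,y)| ≥ 1 for every (x,y) in the convex hull of the support of a, where D_{π⊥}S denotes the third-order directional derivative (v₁·∇)(v₂·∇)(v₃·∇)S. Then there exists a constant C (depending on S, a and the maps π_j) such that for every real λ with |λ| ≥ 1 and all f₁, f₂, f₃ ∈ L²(ℝ): |∬_{ℝ²} e^{iλS(x,y)} a(x,y) f₁(π₁(x,y)) f₂(π₂(x,y)) f₃(π₃(x,y)) dx dy| ≤ C |λ|^{−1/6} ‖f₁‖_{L²} ‖f₂‖_{L²} ‖f₃‖_{L²}. -/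
open MeasureTheory

noncomputable section

namespace Tri

lemma contDiff_div_of_tsupport {A φ : ℝ → ℝ} (hA : ContDiff ℝ (⊤ : ℕ∞) A)
    (hφ : ContDiff ℝ (⊤ : ℕ∞) φ) (h0 : ∀ y ∈ tsupport A, φ y ≠ 0) :
    ContDiff ℝ (⊤ : ℕ∞) (fun y => A y / φ y) := by
  rw [contDiff_iff_contDiffAt]
  intro y
  by_cases hy : y ∈ tsupport A
  · exact hA.contDiffAt.div hφ.contDiffAt (h0 y hy)
  · have h1 : A =ᶠ[nhds y] 0 := notMem_tsupport_iff_eventuallyEq.mp hy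
    have h2 : (fun y => A y / φ y) =ᶠ[nhds y] fun _ => 0 := by
      filter_upwards [h1] with z hz
      simp [hz]
    exact contDiffAt_const.congr_of_eventuallyEq h2

lemma tsupport_div_subset (A φ : ℝ → ℝ) : tsupport (fun y => A y / φ y) ⊆ tsupport A := by
  apply closure_mono
  intro y hy
  simp only [Function.mem_support] at *
  intro h
  simp [h] at hy

lemma ibp {b ψ : ℝ → ℝ} (hb : ContDiff ℝ (⊤ : ℕ∞) b) (hψ : ContDiff ℝ (⊤ : ℕ∞) ψ)
    (hc : HasCompactSupport b) (lam : ℝ) :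
    (Complex.I * lam) * ∫ y, Complex.exp (Complex.I * lam * ψ y) * ((b y * deriv ψ y : ℝ) : ℂ) =
      - ∫ y, Complex.exp (Complex.I * lam * ψ y) * ((deriv b y : ℝ) : ℂ) := by
  have hb1 : ContDiff ℝ (⊤ : ℕ∞) (deriv b) := hb.iterate_deriv 1
  have hψ1 : ContDiff ℝ (⊤ : ℕ∞) (deriv ψ) := hψ.iterate_deriv 1
  have cb := hb.continuous
  have cψ := hψ.continuous
  have cb1 := hb1.continuous
  have cψ1 := hψ1.continuous
  have i1 : Integrable (fun y => Complex.exp (Complex.I * lam * ψ y) * ((b y * deriv ψ y : ℝ) : ℂ)) := by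
    apply Continuous.integrable_of_hasCompactSupport (by fun_prop)
    refine hc.mono ?_
    intro y hy hb0
    simp [hb0] at hy
  have i2 : Integrable (fun y => Complex.exp (Complex.I * lam * ψ y) * ((deriv b y : ℝ) : ℂ)) := by
    apply Continuous.integrable_of_hasCompactSupport (by fun_prop)
    refine hc.deriv.mono ?_
    intro y hy hb0
    simp [hb0] at hy
  have i3 : Integrable (fun y => Complex.exp (Complex.I * lam * ψ y) * ((b y : ℝ) : ℂ)) := by
    apply Continuous.integrable_of_hasCompactSupport (by fun_prop)
    refine hc.mono ?_
    intro y hy hb0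
    simp [hb0] at hy
  have hd : ∀ y, HasDerivAt (fun y => Complex.exp (Complex.I * lam * ψ y) * ((b y : ℝ) : ℂ))
      ((Complex.I * lam) * (Complex.exp (Complex.I * lam * ψ y) * ((b y * deriv ψ y : ℝ) : ℂ)) +
      Complex.exp (Complex.I * lam * ψ y) * ((deriv b y : ℝ) : ℂ)) y := by
    intro y
    have d1 : HasDerivAt (fun y => (ψ y : ℂ)) ((deriv ψ y : ℝ) : ℂ) y :=
      ((hψ.differentiable (by simp)) y).hasDerivAt.ofReal_comp
    have d2 : HasDerivAt (fun y => (b y : ℂ)) ((deriv b y : ℝ) : ℂ) y :=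
      ((hb.differentiable (by simp)) y).hasDerivAt.ofReal_comp
    refine ((d1.const_mul (Complex.I * lam)).cexp.fun_mul d2).congr_deriv ?_
    push_cast
    ring
  have := integral_eq_zero_of_hasDerivAt_of_integrable hd ((i1.const_mul _).add i2) i3
  rw [integral_add (i1.const_mul _) i2, integral_const_mul] at this
  linear_combination this

lemma osc {A ψ : ℝ → ℝ} (hA : ContDiff ℝ (⊤ : ℕ∞) A) (hψ : ContDiff ℝ (⊤ : ℕ∞) ψ)
    {R M Q m lam : ℝ} (hR : 0 ≤ R) (hM : 0 ≤ M) (hQ : 0 ≤ Q) (hm : 0 < m) (hl : lam ≠ 0)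
    (hsupp : tsupport A ⊆ Set.Icc (-R) R)
    (hA0 : ∀ y, |A y| ≤ M) (hA1 : ∀ y, |deriv A y| ≤ M) (hA2 : ∀ y, |deriv (deriv A) y| ≤ M)
    (h1 : ∀ y ∈ tsupport A, m ≤ |deriv ψ y|)
    (h2 : ∀ y ∈ tsupport A, |deriv (deriv ψ) y| ≤ Q * m)
    (h3 : ∀ y ∈ tsupport A, |deriv (deriv (deriv ψ)) y| ≤ Q * m) :
    ‖∫ y, Complex.exp (Complex.I * lam * ψ y) * ((A y : ℝ) : ℂ)‖ ≤
      2 * R * (M * (1 + 4 * Q + 3 * Q ^ 2)) / (lam * m) ^ 2 := by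
  have hcA : HasCompactSupport A := isCompact_Icc.of_isClosed_subset (isClosed_tsupport _) hsupp
  set φ := deriv ψ with hφdef
  have hφ : ContDiff ℝ (⊤ : ℕ∞) φ := hψ.iterate_deriv 1
  have hφ1 : ContDiff ℝ (⊤ : ℕ∞) (deriv φ) := hφ.iterate_deriv 1
  have hAd1 : ContDiff ℝ (⊤ : ℕ∞) (deriv A) := hA.iterate_deriv 1
  have hne : ∀ y ∈ tsupport A, φ y ≠ 0 := by
    intro y hy h0
    have := h1 y hy
    rw [h0, abs_zero] at this
    linarith
  set b := fun y => A y / φ y with hbdef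
  have hb : ContDiff ℝ (⊤ : ℕ∞) b := contDiff_div_of_tsupport hA hφ hne
  have hbs : tsupport b ⊆ tsupport A := tsupport_div_subset A φ
  have hb1 : ContDiff ℝ (⊤ : ℕ∞) (deriv b) := hb.iterate_deriv 1
  have hb1s : tsupport (deriv b) ⊆ tsupport A :=
    (closure_minimal (support_deriv_subset) (isClosed_tsupport _)).trans hbs
  set c := fun y => deriv b y / φ y with hcdef
  have hc : ContDiff ℝ (⊤ : ℕ∞) c := contDiff_div_of_tsupport hb1 hφ (fun y hy => hne y (hb1s hy))
  have hcs : tsupport c ⊆ tsupport A := (tsupport_div_subset _ φ).trans hb1s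
  have hc1s : tsupport (deriv c) ⊆ tsupport A :=
    (closure_minimal (support_deriv_subset) (isClosed_tsupport _)).trans hcs
  have eA : ∀ y, A y = b y * φ y := by
    intro y
    by_cases hy : y ∈ tsupport A
    · simp [hbdef, hne y hy]
    · have := image_eq_zero_of_notMem_tsupport hy
      simp [hbdef, this]
  have eb : ∀ y, deriv b y = c y * φ y := by
    intro y
    by_cases hy : y ∈ tsupport A
    · simp [hcdef, hne y hy]
    · have := image_eq_zero_of_notMem_tsupport (fun h => hy (hb1s h))
      simp [hcdef, this]
  have hcb : HasCompactSupport b := hcA.of_isClosed_subset (isClosed_tsupport _) hbs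
  have hcc : HasCompactSupport c := hcA.of_isClosed_subset (isClosed_tsupport _) hcs
  have I1 := ibp hb hψ hcb lam
  have I2 := ibp hc hψ hcc lam
  simp_rw [← hφdef, ← eA] at I1
  simp_rw [← hφdef, ← eb] at I2
  have I3 : ((lam : ℂ) ^ 2) * ∫ y, Complex.exp (Complex.I * lam * ψ y) * ((A y : ℝ) : ℂ) =
      - ∫ y, Complex.exp (Complex.I * lam * ψ y) * ((deriv c y : ℝ) : ℂ) := by
    linear_combination (-Complex.I * lam) * I1 + I2 + (lam : ℂ) ^ 2 * (∫ y, Complex.exp (Complex.I * lam * ψ y) * ((A y : ℝ) : ℂ)) * Complex.I_sq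
  have bd : ∀ y, |deriv c y| ≤ M * (1 + 4 * Q + 3 * Q ^ 2) / m ^ 2 := by
    intro y
    by_cases hy : y ∈ tsupport A
    swap
    · rw [image_eq_zero_of_notMem_tsupport (fun h => hy (hc1s h)), abs_zero]
      positivity
    have hny := hne y hy
    have ev : ∀ᶠ z in nhds y, φ z ≠ 0 := hφ.continuous.continuousAt.eventually_ne hny
    have dA : ∀ z, HasDerivAt A (deriv A z) z := fun z => (hA.differentiable (by simp) z).hasDerivAt
    have dA1 : ∀ z, HasDerivAt (deriv A) (deriv (deriv A) z) z :=
      fun z => (hAd1.differentiable (by simp) z).hasDerivAt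
    have dφ : ∀ z, HasDerivAt φ (deriv φ z) z := fun z => (hφ.differentiable (by simp) z).hasDerivAt
    have dφ1 : ∀ z, HasDerivAt (deriv φ) (deriv (deriv φ) z) z :=
      fun z => (hφ1.differentiable (by simp) z).hasDerivAt
    have ec : c =ᶠ[nhds y] fun z => (deriv A z * φ z - A z * deriv φ z) / φ z ^ 3 := by
      filter_upwards [ev] with z hz
      simp only [hcdef]
      rw [((dA z).fun_div (dφ z) hz).deriv]
      field_simp
    have dc := ((((dA1 y).mul (dφ y)).sub ((dA y).mul (dφ1 y))).div ((dφ y).pow 3)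
      (pow_ne_zero 3 hny)).congr_of_eventuallyEq ec
    have hform : deriv c y = deriv (deriv A) y * (1 / φ y ^ 2) - A y * (deriv (deriv φ) y / φ y) * (1 / φ y ^ 2)
        - 3 * (deriv A y) * (deriv φ y / φ y) * (1 / φ y ^ 2)
        + 3 * A y * (deriv φ y / φ y) ^ 2 * (1 / φ y ^ 2) := by
      rw [dc.deriv]
      simp
      field_simp
      ring
    have q1 : |deriv φ y / φ y| ≤ Q := by
      rw [abs_div, div_le_iff₀ (abs_pos.mpr hny)]
      exact (h2 y hy).trans (mul_le_mul_of_nonneg_left (h1 y hy) hQ)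
    have q2 : |deriv (deriv φ) y / φ y| ≤ Q := by
      rw [abs_div, div_le_iff₀ (abs_pos.mpr hny)]
      exact (h3 y hy).trans (mul_le_mul_of_nonneg_left (h1 y hy) hQ)
    have q3 : |1 / φ y ^ 2| ≤ 1 / m ^ 2 := by
      rw [abs_div, abs_one, abs_pow]
      exact one_div_le_one_div_of_le (by positivity) (pow_le_pow_left₀ hm.le (h1 y hy) 2)
    have a0 := hA0 y
    have a1 := hA1 y
    have a2 := hA2 y
    have hform2 : deriv c y = (deriv (deriv A) y - A y * (deriv (deriv φ) y / φ y)
        - 3 * (deriv A y) * (deriv φ y / φ y) + 3 * A y * (deriv φ y / φ y) ^ 2) * (1 / φ y ^ 2) := by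
      rw [hform]; ring
    rw [hform2, abs_mul, mul_div_assoc, div_eq_mul_one_div _ (m ^ 2), ← mul_assoc]
    have t1 : |A y * (deriv (deriv φ) y / φ y)| ≤ M * Q := by
      rw [abs_mul]; gcongr
    have t2 : |3 * (deriv A y) * (deriv φ y / φ y)| ≤ 3 * M * Q := by
      rw [abs_mul, abs_mul, abs_of_pos (by norm_num : (0:ℝ) < 3)]; gcongr
    have t3 : |3 * A y * (deriv φ y / φ y) ^ 2| ≤ 3 * M * Q ^ 2 := by
      rw [abs_mul, abs_mul, abs_of_pos (by norm_num : (0:ℝ) < 3), abs_pow]; gcongr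
    refine mul_le_mul ?_ q3 (abs_nonneg _) (by positivity)
    rw [abs_le] at *
    constructor <;> nlinarith
  have hnorm : ‖∫ y, Complex.exp (Complex.I * lam * ψ y) * ((deriv c y : ℝ) : ℂ)‖ ≤
      M * (1 + 4 * Q + 3 * Q ^ 2) / m ^ 2 * (2 * R) := by
    rw [← setIntegral_eq_integral_of_forall_compl_eq_zero (s := Set.Icc (-R) R)]
    · have := norm_setIntegral_le_of_norm_le_const (μ := volume) (s := Set.Icc (-R) R)
        (f := fun y => Complex.exp (Complex.I * lam * ψ y) * ((deriv c y : ℝ) : ℂ))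
        (C := M * (1 + 4 * Q + 3 * Q ^ 2) / m ^ 2) (by simp) (by
          intro y _
          have : Complex.I * lam * ψ y = ((lam * ψ y : ℝ) : ℂ) * Complex.I := by push_cast; ring
          rw [norm_mul, this, Complex.norm_exp_ofReal_mul_I, one_mul, Complex.norm_real]
          exact bd y)
      refine this.trans (le_of_eq ?_)
      rw [Real.volume_real_Icc_of_le (by linarith)]
      ring
    · intro y hy
      rw [image_eq_zero_of_notMem_tsupport (fun h => hy (hsupp (hc1s h)))]
      simp
  have h4 := congrArg norm I3
  rw [norm_mul, norm_neg, norm_pow, Complex.norm_real, Real.norm_eq_abs, sq_abs] at h4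
  rw [le_div_iff₀ (by positivity), mul_pow]
  calc _ = (lam ^ 2 * ‖∫ y, Complex.exp (Complex.I * lam * ψ y) * ((A y : ℝ) : ℂ)‖) * m ^ 2 := by ring
    _ ≤ (M * (1 + 4 * Q + 3 * Q ^ 2) / m ^ 2 * (2 * R)) * m ^ 2 := by
        rw [h4]; gcongr
    _ = _ := by field_simp



/-- directional derivative -/
def dd (v : ℝ × ℝ) (F : ℝ × ℝ → ℝ) : ℝ × ℝ → ℝ := fun p => fderiv ℝ F p v

lemma dd_contDiff {F : ℝ × ℝ → ℝ} (hF : ContDiff ℝ (⊤ : ℕ∞) F) (v : ℝ × ℝ) :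
    ContDiff ℝ (⊤ : ℕ∞) (dd v F) := by
  have : ContDiff ℝ (⊤ : ℕ∞) (fderiv ℝ F) := hF.fderiv_right (by simp)
  exact this.clm_apply contDiff_const

lemma mvt1 {g g' : ℝ → ℝ} (hg : ∀ x, HasDerivAt g (g' x) x) (x s : ℝ) :
    ∃ θ ∈ Set.Icc (0 : ℝ) 1, g (x + s) - g x = s * g' (x + θ * s) := by
  have hd : ∀ θ : ℝ, HasDerivAt (fun θ => g (x + θ * s)) (g' (x + θ * s) * s) θ := by
    intro θ
    have h1 : HasDerivAt (fun θ : ℝ => x + θ * s) s θ := by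
      simpa using ((hasDerivAt_id θ).mul_const s).const_add x
    exact (hg (x + θ * s)).comp θ h1
  obtain ⟨θ, hθ, h⟩ := exists_hasDerivAt_eq_slope (fun θ => g (x + θ * s))
    (fun θ => g' (x + θ * s) * s) (zero_lt_one) (fun θ _ => (hd θ).continuousAt.continuousWithinAt)
    (fun θ _ => hd θ)
  refine ⟨θ, Set.Ioo_subset_Icc_self hθ, ?_⟩
  simp at h
  linarith

lemma hasDerivAt_fst {F : ℝ × ℝ → ℝ} (hF : ContDiff ℝ (⊤ : ℕ∞) F) (y x : ℝ) :
    HasDerivAt (fun u => F (u, y)) (dd (1, 0) F (x, y)) x := by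
  have h := (hF.differentiable (by simp) (x, y)).hasFDerivAt
  exact h.comp_hasDerivAt x ((hasDerivAt_id x).prodMk (hasDerivAt_const x y))

lemma hasDerivAt_snd {F : ℝ × ℝ → ℝ} (hF : ContDiff ℝ (⊤ : ℕ∞) F) (x y : ℝ) :
    HasDerivAt (fun u => F (x, u)) (dd (0, 1) F (x, y)) y := by
  have h := (hF.differentiable (by simp) (x, y)).hasFDerivAt
  exact h.comp_hasDerivAt y ((hasDerivAt_const y x).prodMk (hasDerivAt_id y))

lemma hasDerivAt_diag {F : ℝ × ℝ → ℝ} (hF : ContDiff ℝ (⊤ : ℕ∞) F) (α β y : ℝ) :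
    HasDerivAt (fun u => F (α - u, u + β)) (dd (-1, 1) F (α - y, y + β)) y := by
  have h := (hF.differentiable (by simp) (α - y, y + β)).hasFDerivAt
  exact h.comp_hasDerivAt y (((hasDerivAt_id y).const_sub α).prodMk ((hasDerivAt_id y).add_const β))

lemma second_diff {F : ℝ × ℝ → ℝ} (hF : ContDiff ℝ (⊤ : ℕ∞) F) {K : Set (ℝ × ℝ)}
    (hK : Convex ℝ K) (x y s t : ℝ) (h1 : (x, y) ∈ K) (h2 : (x, y + t) ∈ K)
    (h3 : (x + s, y) ∈ K) (h4 : (x + s, y + t) ∈ K) :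
    ∃ ξ ∈ K, F (x, y) - F (x, y + t) - F (x + s, y) + F (x + s, y + t) =
      t * s * dd (0, 1) (dd (1, 0) F) ξ := by
  obtain ⟨θ, hθ, h⟩ := mvt1 (fun u => (hasDerivAt_fst hF (y + t) u).sub (hasDerivAt_fst hF y u)) x s
  obtain ⟨η, hη, h'⟩ := mvt1 (fun u => hasDerivAt_snd (dd_contDiff hF (1, 0)) (x + θ * s) u) y t
  refine ⟨(x + θ * s, y + η * t), ?_, ?_⟩
  · have k1 : (x + θ * s, y) ∈ K := by
      have := hK h1 h3 (sub_nonneg.mpr hθ.2) hθ.1 (by ring)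
      convert this using 1
      ext <;> simp <;> ring
    have k2 : (x + θ * s, y + t) ∈ K := by
      have := hK h2 h4 (sub_nonneg.mpr hθ.2) hθ.1 (by ring)
      convert this using 1
      ext <;> simp <;> ring
    have := hK k1 k2 (sub_nonneg.mpr hη.2) hη.1 (by ring)
    convert this using 1
    ext <;> simp <;> ring
  · rw [h'] at h
    simp at h
    linarith

/-- C² bounds -/
def Bd (u : ℝ → ℝ) (M : ℝ) : Prop :=
  ContDiff ℝ (⊤ : ℕ∞) u ∧ ∀ y, |u y| ≤ M ∧ |deriv u y| ≤ M ∧ |deriv (deriv u) y| ≤ M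

lemma Bd.mul {u v : ℝ → ℝ} {M N : ℝ} (hu : Bd u M) (hv : Bd v N) :
    Bd (fun y => u y * v y) (4 * (M * N)) := by
  obtain ⟨cu, hu⟩ := hu
  obtain ⟨cv, hv⟩ := hv
  have cu1 : ContDiff ℝ (⊤ : ℕ∞) (deriv u) := cu.iterate_deriv 1
  have cv1 : ContDiff ℝ (⊤ : ℕ∞) (deriv v) := cv.iterate_deriv 1
  have du : ∀ z, HasDerivAt u (deriv u z) z := fun z => (cu.differentiable (by simp) z).hasDerivAt
  have dv : ∀ z, HasDerivAt v (deriv v z) z := fun z => (cv.differentiable (by simp) z).hasDerivAt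
  have du1 : ∀ z, HasDerivAt (deriv u) (deriv (deriv u) z) z :=
    fun z => (cu1.differentiable (by simp) z).hasDerivAt
  have dv1 : ∀ z, HasDerivAt (deriv v) (deriv (deriv v) z) z :=
    fun z => (cv1.differentiable (by simp) z).hasDerivAt
  have e1 : deriv (fun y => u y * v y) = fun y => deriv u y * v y + u y * deriv v y := by
    ext z; exact ((du z).fun_mul (dv z)).deriv
  refine ⟨cu.mul cv, fun y => ?_⟩
  obtain ⟨a0, a1, a2⟩ := hu y
  obtain ⟨b0, b1, b2⟩ := hv y
  have hM : 0 ≤ M := (abs_nonneg _).trans a0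
  have key : ∀ p q : ℝ, |p| ≤ M → |q| ≤ N → |p * q| ≤ M * N := fun p q hp hq => by
    rw [abs_mul]; exact mul_le_mul hp hq (abs_nonneg _) hM
  have hMN : 0 ≤ M * N := (abs_nonneg _).trans (key _ _ a0 b0)
  refine ⟨(key _ _ a0 b0).trans (by linarith), ?_, ?_⟩
  · rw [e1]
    have k1 := key _ _ a1 b0
    have k2 := key _ _ a0 b1
    exact (abs_add_le _ _).trans (by linarith)
  · rw [e1, (((du1 y).fun_mul (dv y)).fun_add ((du y).fun_mul (dv1 y))).deriv]
    have k1 := key _ _ a2 b0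
    have k2 := key _ _ a1 b1
    have k3 := key _ _ a0 b2
    rw [abs_le] at *
    constructor <;> linarith

/-- second difference along the antidiagonal line -/
def G2 (z t s : ℝ) (F : ℝ × ℝ → ℝ) (y : ℝ) : ℝ :=
  F (z - y, y) - F (z - y, y + t) - F (z + s - y, y) + F (z + s - y, y + t)

lemma deriv_G2 {F : ℝ × ℝ → ℝ} (hF : ContDiff ℝ (⊤ : ℕ∞) F) (z t s : ℝ) :
    deriv (G2 z t s F) = G2 z t s (dd (-1, 1) F) := by
  ext y
  have h := (((hasDerivAt_diag hF z 0 y).fun_sub (hasDerivAt_diag hF z t y)).fun_sub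
    (hasDerivAt_diag hF (z + s) 0 y)).fun_add (hasDerivAt_diag hF (z + s) t y)
  simp only [add_zero] at h
  exact h.deriv

lemma G2_contDiff {F : ℝ × ℝ → ℝ} (hF : ContDiff ℝ (⊤ : ℕ∞) F) (z t s : ℝ) :
    ContDiff ℝ (⊤ : ℕ∞) (G2 z t s F) := by
  unfold G2
  fun_prop

lemma exists_bd {F : ℝ × ℝ → ℝ} (hF : ContDiff ℝ (⊤ : ℕ∞) F) {K : Set (ℝ × ℝ)}
    (hK : IsCompact K) : ∃ N, 0 ≤ N ∧ ∀ p ∈ K, |F p| ≤ N := by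
  obtain ⟨N, hN⟩ := hK.exists_bound_of_continuousOn hF.continuous.continuousOn
  exact ⟨max N 0, le_max_right _ _, fun p hp => (hN p hp).trans (le_max_left _ _)⟩

lemma dd_supp {F : ℝ × ℝ → ℝ} (v : ℝ × ℝ) : tsupport (dd v F) ⊆ tsupport F := by
  refine closure_minimal ?_ (isClosed_tsupport _)
  intro p hp
  by_contra h
  apply hp
  have : fderiv ℝ F p = 0 := by
    by_contra h2
    exact h (support_fderiv_subset ℝ h2)
  simp [dd, this]

lemma exists_bd' {F : ℝ × ℝ → ℝ} (hF : ContDiff ℝ (⊤ : ℕ∞) F) {K : Set (ℝ × ℝ)}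
    (hK : IsCompact K) (hs : tsupport F ⊆ K) : ∃ N, 0 ≤ N ∧ ∀ p, |F p| ≤ N := by
  obtain ⟨N, h0, hN⟩ := exists_bd hF hK
  refine ⟨N, h0, fun p => ?_⟩
  by_cases hp : p ∈ K
  · exact hN p hp
  · rw [image_eq_zero_of_notMem_tsupport (fun h => hp (hs h))]; simpa

lemma exists_Bd {a : ℝ × ℝ → ℝ} (ha : ContDiff ℝ (⊤ : ℕ∞) a) (hc : HasCompactSupport a) :
    ∃ M, 0 ≤ M ∧ ∀ α β, Bd (fun y => a (α - y, y + β)) M := by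
  have c1 := dd_contDiff ha (-1, 1)
  have c2 := dd_contDiff c1 (-1, 1)
  have s1 := dd_supp (F := a) (-1, 1)
  have s2 := dd_supp (F := dd (-1, 1) a) (-1, 1)
  obtain ⟨M0, p0, h0⟩ := exists_bd' ha hc subset_rfl
  obtain ⟨M1, p1, h1⟩ := exists_bd' c1 hc s1
  obtain ⟨M2, p2, h2⟩ := exists_bd' c2 hc (s2.trans s1)
  refine ⟨M0 + M1 + M2, by positivity, fun α β => ⟨by fun_prop, fun y => ?_⟩⟩
  have e1 : deriv (fun y => a (α - y, y + β)) = fun y => dd (-1, 1) a (α - y, y + β) := by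
    ext z; exact (hasDerivAt_diag ha α β z).deriv
  have e2 : deriv (deriv (fun y => a (α - y, y + β))) = fun y => dd (-1, 1) (dd (-1, 1) a) (α - y, y + β) := by
    rw [e1]; ext z; exact (hasDerivAt_diag c1 α β z).deriv
  rw [e1, ← e1, e2, e1]
  exact ⟨(h0 _).trans (by linarith), (h1 _).trans (by linarith), (h2 _).trans (by linarith)⟩

/-- the oscillating amplitude -/
def ee (lam : ℝ) (S a : ℝ × ℝ → ℝ) (p : ℝ × ℝ) : ℂ :=
  Complex.exp (Complex.I * lam * S p) * (a p : ℂ)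

/-- amplitude after the first difference -/
def Et (lam : ℝ) (S a : ℝ × ℝ → ℝ) (t : ℝ) (p : ℝ × ℝ) : ℂ :=
  ee lam S a p * (starRingEnd ℂ) (ee lam S a (p.1, p.2 + t))

lemma conj_ee (lam : ℝ) (S a : ℝ × ℝ → ℝ) (p : ℝ × ℝ) :
    (starRingEnd ℂ) (ee lam S a p) = Complex.exp (- (Complex.I * lam * S p)) * (a p : ℂ) := by
  unfold ee
  rw [map_mul, ← Complex.exp_conj]
  simp

lemma norm_ee (lam : ℝ) (S a : ℝ × ℝ → ℝ) (p : ℝ × ℝ) : ‖ee lam S a p‖ = |a p| := by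
  unfold ee
  have : Complex.I * lam * S p = ((lam * S p : ℝ) : ℂ) * Complex.I := by push_cast; ring
  rw [norm_mul, this, Complex.norm_exp_ofReal_mul_I, one_mul, Complex.norm_real, Real.norm_eq_abs]

lemma kernel_eq (lam : ℝ) (S a : ℝ × ℝ → ℝ) (z t s y : ℝ) :
    Et lam S a t (z - y, y) * (starRingEnd ℂ) (Et lam S a t (z + s - y, y)) =
    Complex.exp (Complex.I * lam * G2 z t s S y) *
      ((a (z - y, y + 0) * a (z - y, y + t) * (a (z + s - y, y + 0) * a (z + s - y, y + t)) : ℝ) : ℂ) := by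
  unfold Et
  rw [map_mul, Complex.conj_conj, conj_ee, conj_ee]
  unfold ee G2
  simp only [add_zero]
  push_cast
  rw [show Complex.I * lam * ((S (z - y, y) : ℂ) - S (z - y, y + t) - S (z + s - y, y) + S (z + s - y, y + t))
    = Complex.I * lam * S (z - y, y) + -(Complex.I * lam * S (z - y, y + t)) +
      (-(Complex.I * lam * S (z + s - y, y)) + Complex.I * lam * S (z + s - y, y + t)) by ring,
    Complex.exp_add, Complex.exp_add, Complex.exp_add]
  ring

theorem kernel_bound {a S : ℝ × ℝ → ℝ} (ha : ContDiff ℝ (⊤ : ℕ∞) a) (hacs : HasCompactSupport a)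
    (hS : ContDiff ℝ (⊤ : ℕ∞) S) {c : ℝ} (hc : 0 < c)
    (hD : ∀ p ∈ convexHull ℝ (tsupport a), c ≤ |dd (0, 1) (dd (1, 0) (dd (-1, 1) S)) p|) :
    ∃ C : ℝ, 0 ≤ C ∧ ∀ lam : ℝ, lam ≠ 0 → ∀ z t s : ℝ,
      ‖∫ y, Et lam S a t (z - y, y) * (starRingEnd ℂ) (Et lam S a t (z + s - y, y))‖ ≤
        C * (1 + ((lam * t) * s) ^ 2)⁻¹ := by
  have hKc : IsCompact (closure (convexHull ℝ (tsupport a))) :=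
    (isBounded_convexHull.mpr hacs.isBounded).isCompact_closure
  have hKv : Convex ℝ (convexHull ℝ (tsupport a)) := convex_convexHull ℝ _
  have hsub : tsupport a ⊆ convexHull ℝ (tsupport a) := subset_convexHull ℝ _
  set K := convexHull ℝ (tsupport a) with hKdef
  have S1 := dd_contDiff hS (-1, 1)
  have S2 := dd_contDiff S1 (-1, 1)
  have S3 := dd_contDiff S2 (-1, 1)
  obtain ⟨N2, p2, hN2⟩ := exists_bd (dd_contDiff (dd_contDiff S2 (1, 0)) (0, 1)) hKc
  obtain ⟨N3, p3, hN3⟩ := exists_bd (dd_contDiff (dd_contDiff S3 (1, 0)) (0, 1)) hKc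
  obtain ⟨M, hM, hBd⟩ := exists_Bd ha hacs
  obtain ⟨R, hR⟩ := hacs.isBounded.subset_closedBall 0
  obtain ⟨R, hR0, hR⟩ : ∃ R : ℝ, 0 ≤ R ∧ tsupport a ⊆ Metric.closedBall 0 R :=
    ⟨max R 0, le_max_right _ _, hR.trans (Metric.closedBall_subset_closedBall (le_max_left _ _))⟩
  set Q := (N2 + N3) / c with hQ
  have hQ0 : 0 ≤ Q := by positivity
  set M' := 4 * (4 * (M * M) * (4 * (M * M))) with hM'
  have hM'0 : 0 ≤ M' := by positivity
  refine ⟨M' * (2 * R) + 2 * R * (M' * (1 + 4 * Q + 3 * Q ^ 2)) / c ^ 2, by positivity, ?_⟩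
  intro lam hl z t s
  simp_rw [kernel_eq]
  set A : ℝ → ℝ := fun y => a (z - y, y + 0) * a (z - y, y + t) *
    (a (z + s - y, y + 0) * a (z + s - y, y + t)) with hAdef
  have hA : Bd A M' := ((hBd z 0).mul (hBd z t)).mul ((hBd (z + s) 0).mul (hBd (z + s) t))
  have hmem : ∀ α β : ℝ, (∀ y, a (α - y, y + β) = 0 → A y = 0) →
      ∀ y ∈ tsupport A, (α - y, y + β) ∈ tsupport a := by
    intro α β h y hy
    have hcl : IsClosed {y : ℝ | (α - y, y + β) ∈ tsupport a} :=
      (isClosed_tsupport a).preimage (by fun_prop)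
    refine closure_minimal ?_ hcl hy
    intro u hu
    exact subset_tsupport _ (fun h0 => hu (h u h0))
  have m1 := hmem z 0 (fun y h => by simp only [hAdef, h]; ring)
  have m2 := hmem z t (fun y h => by simp only [hAdef, h]; ring)
  have m3 := hmem (z + s) 0 (fun y h => by simp only [hAdef, h]; ring)
  have m4 := hmem (z + s) t (fun y h => by simp only [hAdef, h]; ring)
  have hsupp : tsupport A ⊆ Set.Icc (-R) R := by
    intro y hy
    have := hR (m1 y hy)
    rw [mem_closedBall_zero_iff, Prod.norm_def, max_le_iff] at this
    simpa [abs_le] using this.2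
  have triv : ‖∫ y, Complex.exp (Complex.I * lam * G2 z t s S y) * ((A y : ℝ) : ℂ)‖ ≤ M' * (2 * R) := by
    rw [← setIntegral_eq_integral_of_forall_compl_eq_zero (s := Set.Icc (-R) R)]
    · refine (norm_setIntegral_le_of_norm_le_const (μ := volume) (s := Set.Icc (-R) R) (C := M') (by simp) (by
          intro y _
          have : Complex.I * lam * G2 z t s S y = ((lam * G2 z t s S y : ℝ) : ℂ) * Complex.I := by
            push_cast; ring
          rw [norm_mul, this, Complex.norm_exp_ofReal_mul_I, one_mul, Complex.norm_real]
          exact (hA.2 y).1)).trans (le_of_eq ?_)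
      rw [Real.volume_real_Icc_of_le (by linarith)]
      ring
    · intro y hy
      rw [image_eq_zero_of_notMem_tsupport (fun h => hy (hsupp h))]
      simp
  have hsd : ∀ F : ℝ × ℝ → ℝ, ContDiff ℝ (⊤ : ℕ∞) F → ∀ y ∈ tsupport A, ∃ ξ ∈ K,
      G2 z t s F y = t * s * dd (0, 1) (dd (1, 0) F) ξ := by
    intro F hF y hy
    have e : z + s - y = z - y + s := by ring
    have k1 := hsub (m1 y hy)
    have k2 := hsub (m2 y hy)
    have k3 := hsub (m3 y hy)
    have k4 := hsub (m4 y hy)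
    rw [e] at k3 k4
    rw [add_zero] at k1 k3
    obtain ⟨ξ, hξ, h⟩ := second_diff hF hKv (z - y) y s t k1 k2 k3 k4
    refine ⟨ξ, hξ, ?_⟩
    unfold G2
    rw [e]
    exact h
  by_cases hts : t * s = 0
  · rw [mul_assoc lam t s, hts]
    refine triv.trans ?_
    simp only [mul_zero, ne_eq, OfNat.ofNat_ne_zero, not_false_eq_true, zero_pow, add_zero, inv_one, mul_one]
    have : 0 ≤ 2 * R * (M' * (1 + 4 * Q + 3 * Q ^ 2)) / c ^ 2 := by positivity
    linarith
  have hm : 0 < c * |t * s| := by positivity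
  have main := osc (A := A) (ψ := G2 z t s S) (R := R) (M := M') (Q := Q) (m := c * |t * s|) hA.1
    (G2_contDiff hS z t s) hR0 hM'0 hQ0 hm hl hsupp
    (fun y => (hA.2 y).1) (fun y => (hA.2 y).2.1) (fun y => (hA.2 y).2.2)
    (by
      intro y hy
      rw [deriv_G2 hS]
      obtain ⟨ξ, hξ, h⟩ := hsd _ S1 y hy
      rw [h, abs_mul (t * s), mul_comm c]
      exact mul_le_mul_of_nonneg_left (hD ξ hξ) (abs_nonneg _))
    (by
      intro y hy
      rw [deriv_G2 hS, deriv_G2 S1]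
      obtain ⟨ξ, hξ, h⟩ := hsd _ S2 y hy
      rw [h, abs_mul, hQ, ← mul_assoc, div_mul_cancel₀ _ hc.ne', mul_comm]
      exact mul_le_mul_of_nonneg_right ((hN2 ξ (subset_closure hξ)).trans (by linarith)) (abs_nonneg _))
    (by
      intro y hy
      rw [deriv_G2 hS, deriv_G2 S1, deriv_G2 S2]
      obtain ⟨ξ, hξ, h⟩ := hsd _ S3 y hy
      rw [h, abs_mul, hQ, ← mul_assoc, div_mul_cancel₀ _ hc.ne', mul_comm]
      exact mul_le_mul_of_nonneg_right ((hN3 ξ (subset_closure hξ)).trans (by linarith)) (abs_nonneg _))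
  rw [le_div_iff₀ (by positivity)] at main
  rw [← div_eq_mul_inv, le_div_iff₀ (by positivity)]
  set X := ‖∫ y, Complex.exp (Complex.I * lam * G2 z t s S y) * ((A y : ℝ) : ℂ)‖
  have e2 : (lam * (c * |t * s|)) ^ 2 = (lam * t * s) ^ 2 * c ^ 2 := by
    rw [mul_pow, mul_pow, sq_abs]; ring
  rw [e2, ← mul_assoc, ← le_div_iff₀ (by positivity)] at main
  linarith


lemma hcs_of_bound {X E : Type*} [NormedAddCommGroup X] [ProperSpace X] [Zero E]
    {f : X → E} (R : ℝ) (h : ∀ p, f p ≠ 0 → ‖p‖ ≤ R) : HasCompactSupport f := by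
  refine HasCompactSupport.intro (isCompact_closedBall 0 R) (fun p hp => ?_)
  by_contra h0
  exact hp (mem_closedBall_zero_iff.mpr (h p h0))

lemma bound_of_hcs {X E : Type*} [NormedAddCommGroup X] [Zero E]
    {f : X → E} (hf : HasCompactSupport f) : ∃ R : ℝ, 0 ≤ R ∧ ∀ p, f p ≠ 0 → ‖p‖ ≤ R := by
  obtain ⟨R, hR⟩ := hf.isBounded.subset_closedBall 0
  refine ⟨max R 0, le_max_right _ _, fun p hp => ?_⟩
  exact (mem_closedBall_zero_iff.mp (hR (subset_tsupport _ hp))).trans (le_max_left _ _)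

lemma cs_norm {E F : Type*} [NormedAddCommGroup E] [NormedAddCommGroup F] {u : ℝ → E} {v : ℝ → F}
    (hu : MemLp u 2) (hv : MemLp v 2) :
    ∫ x, ‖u x‖ * ‖v x‖ ≤ √(∫ x, ‖u x‖ ^ 2) * √(∫ x, ‖v x‖ ^ 2) := by
  have h := integral_mul_le_Lp_mul_Lq_of_nonneg (μ := (volume : Measure ℝ))
    (f := fun x => ‖u x‖) (g := fun x => ‖v x‖)
    Real.HolderConjugate.two_two (Filter.Eventually.of_forall fun x => norm_nonneg _)
    (Filter.Eventually.of_forall fun x => norm_nonneg _)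
    (by simpa using hu.norm) (by simpa using hv.norm)
  simpa [Real.sqrt_eq_rpow] using h

lemma norm_le_two {k : ℝ × ℝ} {R : ℝ} (h : ‖k‖ ≤ R) : |k.1| ≤ R ∧ |k.2| ≤ R := by
  rwa [Prod.norm_def, max_le_iff] at h

lemma TT {k : ℝ × ℝ → ℂ} (hk : Continuous k) (hkc : HasCompactSupport k) {f : ℝ → ℂ}
    (hf : Continuous f) (hfc : HasCompactSupport f) :
    ‖∫ x, ∫ y, f x * k (x, y)‖ ^ 2 ≤ (∫ x, ‖f x‖ ^ 2) *
      ∫ t, ‖∫ x, ∫ y, k (x, y) * (starRingEnd ℂ) (k (x, y + t))‖ := by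
  obtain ⟨R, hR0, hR⟩ := bound_of_hcs hkc
  set Φ : ℝ → ℂ := fun x => ∫ y, k (x, y) with hΦ
  have hΦ' : Φ = fun x => ∫ y in Set.Icc (-R) R, k (x, y) := by
    ext x
    refine (setIntegral_eq_integral_of_forall_compl_eq_zero ?_).symm
    intro y hy
    by_contra h
    exact hy (by simpa [abs_le] using (norm_le_two (hR _ h)).2)
  have cΦ : Continuous Φ := by
    rw [hΦ']
    exact continuous_parametric_integral_of_continuous (f := fun x y => k (x, y)) hk isCompact_Icc
  have sΦ : HasCompactSupport Φ := by
    refine hcs_of_bound R (fun x hx => ?_)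
    by_contra h
    apply hx
    have : ∀ y, k (x, y) = 0 := by
      intro y
      by_contra h2
      exact h (norm_le_two (hR _ h2)).1
    simp [hΦ, this]
  have mΦ : MemLp Φ 2 := cΦ.memLp_of_hasCompactSupport sΦ
  have mf : MemLp f 2 := hf.memLp_of_hasCompactSupport hfc
  have step1 : ‖∫ x, ∫ y, f x * k (x, y)‖ ≤ √(∫ x, ‖f x‖ ^ 2) * √(∫ x, ‖Φ x‖ ^ 2) := by
    simp_rw [integral_const_mul]
    refine (norm_integral_le_integral_norm _).trans ?_
    simp_rw [norm_mul]
    exact cs_norm mf mΦ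
  have n1 : 0 ≤ ∫ x, ‖f x‖ ^ 2 := integral_nonneg fun x => by positivity
  have n2 : 0 ≤ ∫ x, ‖Φ x‖ ^ 2 := integral_nonneg fun x => by positivity
  have step2 : ‖∫ x, ∫ y, f x * k (x, y)‖ ^ 2 ≤ (∫ x, ‖f x‖ ^ 2) * (∫ x, ‖Φ x‖ ^ 2) := by
    refine (pow_le_pow_left₀ (norm_nonneg _) step1 2).trans (le_of_eq ?_)
    rw [mul_pow, Real.sq_sqrt n1, Real.sq_sqrt n2]
  refine step2.trans (mul_le_mul_of_nonneg_left ?_ n1)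
  have e1 : ((∫ x, ‖Φ x‖ ^ 2 : ℝ) : ℂ) = ∫ t, ∫ x, ∫ y, k (x, y) * (starRingEnd ℂ) (k (x, y + t)) := by
    have i1 : Integrable (fun p : (ℝ × ℝ) × ℝ => k (p.1.1, p.2) * (starRingEnd ℂ) (k (p.1.1, p.2 + p.1.2))) := by
      apply Continuous.integrable_of_hasCompactSupport
      · exact (hk.comp (by fun_prop)).mul (Complex.continuous_conj.comp (hk.comp (by fun_prop)))
      · refine hcs_of_bound (2 * R) (fun p hp => ?_)
        have h1 := norm_le_two (hR _ (left_ne_zero_of_mul hp))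
        have h2 := norm_le_two (hR _ (fun h0 => right_ne_zero_of_mul hp (by rw [h0, map_zero])))
        simp only [abs_le, Prod.norm_def, Real.norm_eq_abs, sup_le_iff] at *
        refine ⟨⟨⟨?_, ?_⟩, ?_, ?_⟩, ?_, ?_⟩ <;> linarith [h1.1.1, h1.1.2, h1.2.1, h1.2.2, h2.1.1, h2.1.2, h2.2.1, h2.2.2]
    rw [← integral_integral_swap (f := fun x t => ∫ y, k (x, y) * (starRingEnd ℂ) (k (x, y + t)))
      i1.integral_prod_left, ← integral_complex_ofReal]
    congr 1
    ext x
    have i2 : Integrable (fun p : ℝ × ℝ => k (x, p.2) * (starRingEnd ℂ) (k (x, p.2 + p.1))) := by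
      apply Continuous.integrable_of_hasCompactSupport
      · exact (hk.comp (by fun_prop)).mul (Complex.continuous_conj.comp (hk.comp (by fun_prop)))
      · refine hcs_of_bound (2 * R) (fun p hp => ?_)
        have h1 := norm_le_two (hR _ (left_ne_zero_of_mul hp))
        have h2 := norm_le_two (hR _ (fun h0 => right_ne_zero_of_mul hp (by rw [h0, map_zero])))
        simp only [abs_le, Prod.norm_def, Real.norm_eq_abs, sup_le_iff] at *
        refine ⟨⟨?_, ?_⟩, ?_, ?_⟩ <;> linarith [h1.1.1, h1.1.2, h1.2.1, h1.2.2, h2.1.1, h2.1.2, h2.2.1, h2.2.2]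
    rw [integral_integral_swap (f := fun t y => k (x, y) * (starRingEnd ℂ) (k (x, y + t))) i2]
    simp_rw [integral_const_mul]
    have : ∀ y, ∫ t, (starRingEnd ℂ) (k (x, y + t)) = (starRingEnd ℂ) (Φ x) := by
      intro y
      rw [integral_add_left_eq_self (fun t => (starRingEnd ℂ) (k (x, t))) y, integral_conj]
    simp_rw [this, integral_mul_const]
    change _ = Φ x * (starRingEnd ℂ) (Φ x)
    rw [Complex.mul_conj']
    push_cast
    rfl
  calc (∫ x, ‖Φ x‖ ^ 2) = ‖((∫ x, ‖Φ x‖ ^ 2 : ℝ) : ℂ)‖ := by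
        rw [Complex.norm_real, Real.norm_of_nonneg n2]
    _ ≤ _ := by rw [e1]; exact norm_integral_le_integral_norm _

lemma Bil {E : ℝ × ℝ → ℂ} (hE : Continuous E) (hEc : HasCompactSupport E) {G H : ℝ → ℂ}
    (hG : Continuous G) (hGc : HasCompactSupport G) (hH : Continuous H) (hHc : HasCompactSupport H)
    {J : ℝ → ℝ} (hJ : Integrable J) (hb : ∀ z s, ‖∫ y, E (y, z) * (starRingEnd ℂ) (E (y, z + s))‖ ≤ J s) :
    ‖∫ y, ∫ z, G y * (E (y, z) * H z)‖ ^ 2 ≤ (∫ y, ‖G y‖ ^ 2) * ((∫ s, J s) * ∫ z, ‖H z‖ ^ 2) := by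
  have hJ0 : ∀ s, 0 ≤ J s := fun s => (norm_nonneg _).trans (hb 0 s)
  have n1 : 0 ≤ ∫ y, ‖G y‖ ^ 2 := integral_nonneg fun x => by positivity
  obtain ⟨R, hR0, hR⟩ := bound_of_hcs hEc
  have iH : Integrable (fun z => ‖H z‖ ^ 2) := by
    apply Continuous.integrable_of_hasCompactSupport (by fun_prop)
    exact hHc.mono (fun z hz h => by simp [h] at hz)
  refine (TT (k := fun p => E p * H p.2) (by fun_prop) hEc.mul_right hG hGc).trans
    (mul_le_mul_of_nonneg_left ?_ n1)
  rw [← integral_mul_const]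
  refine integral_mono_of_nonneg (Filter.Eventually.of_forall fun s => norm_nonneg _)
    (hJ.mul_const _) (Filter.Eventually.of_forall fun s => ?_)
  simp only
  have i1 : Integrable (fun p : ℝ × ℝ => E (p.1, p.2) * H p.2 * (starRingEnd ℂ) (E (p.1, p.2 + s) * H (p.2 + s))) := by
    apply Continuous.integrable_of_hasCompactSupport
    · exact ((hE.comp (by fun_prop)).mul (hH.comp (by fun_prop))).mul
        (Complex.continuous_conj.comp ((hE.comp (by fun_prop)).mul (hH.comp (by fun_prop))))
    · exact hEc.mono (fun p hp h => by
        apply hp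
        have : E (p.1, p.2) = 0 := h
        simp [this])
  rw [integral_integral_swap (f := fun y z => E (y, z) * H z * (starRingEnd ℂ) (E (y, z + s) * H (z + s))) i1]
  have iHs : Integrable (fun z => ‖H (z + s)‖ ^ 2) := iH.comp_add_right s
  have e : ∫ z, J s * ((‖H z‖ ^ 2 + ‖H (z + s)‖ ^ 2) / 2) = J s * ∫ z, ‖H z‖ ^ 2 := by
    rw [integral_const_mul, integral_div, integral_add iH iHs,
      integral_add_right_eq_self (fun z => ‖H z‖ ^ 2) s]
    ring
  rw [← e]
  refine norm_integral_le_of_norm_le (((iH.add iHs).div_const 2).const_mul (J s))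
    (Filter.Eventually.of_forall fun z => ?_)
  have e2 : ∫ y, E (y, z) * H z * (starRingEnd ℂ) (E (y, z + s) * H (z + s)) =
      (H z * (starRingEnd ℂ) (H (z + s))) * ∫ y, E (y, z) * (starRingEnd ℂ) (E (y, z + s)) := by
    rw [← integral_const_mul]
    congr 1
    ext y
    rw [map_mul]
    ring
  rw [e2, norm_mul, norm_mul, RCLike.norm_conj, mul_comm]
  refine mul_le_mul (hb z s) ?_ (by positivity) (hJ0 s)
  nlinarith [sq_nonneg (‖H z‖ - ‖H (z + s)‖)]

lemma corr {g : ℝ → ℂ} (hg : Continuous g) (hgc : HasCompactSupport g) :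
    Integrable (fun t => ∫ y, ‖g y * (starRingEnd ℂ) (g (y + t))‖ ^ 2) ∧
    ∫ t, ∫ y, ‖g y * (starRingEnd ℂ) (g (y + t))‖ ^ 2 = (∫ y, ‖g y‖ ^ 2) ^ 2 := by
  obtain ⟨R, hR0, hR⟩ := bound_of_hcs hgc
  have i1 : Integrable (fun p : ℝ × ℝ => ‖g p.2 * (starRingEnd ℂ) (g (p.2 + p.1))‖ ^ 2) := by
    apply Continuous.integrable_of_hasCompactSupport
    · exact ((hg.comp (by fun_prop)).mul (Complex.continuous_conj.comp (hg.comp (by fun_prop)))).norm.pow 2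
    · refine hcs_of_bound (2 * R) (fun p hp => ?_)
      have hp' := norm_ne_zero_iff.mp (pow_ne_zero_iff (two_ne_zero) |>.mp hp)
      have h1 := hR _ (left_ne_zero_of_mul hp')
      have h2 := hR _ (fun h0 => right_ne_zero_of_mul hp' (by rw [h0, map_zero]))
      simp only [abs_le, Prod.norm_def, Real.norm_eq_abs, sup_le_iff] at *
      refine ⟨⟨?_, ?_⟩, ?_, ?_⟩ <;> linarith [h1.1, h1.2, h2.1, h2.2]
  refine ⟨i1.integral_prod_left, ?_⟩
  rw [integral_integral_swap (f := fun t y => ‖g y * (starRingEnd ℂ) (g (y + t))‖ ^ 2) i1]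
  simp_rw [norm_mul, RCLike.norm_conj, mul_pow, integral_const_mul]
  have : ∀ y, ∫ t, ‖g (y + t)‖ ^ 2 = ∫ t, ‖g t‖ ^ 2 := fun y =>
    integral_add_left_eq_self (fun t => ‖g t‖ ^ 2) y
  simp_rw [this, integral_mul_const]
  ring


lemma memLp_sqrt {U : ℝ → ℝ} (hU : Integrable U) (h0 : ∀ t, 0 ≤ U t) : MemLp (fun t => √(U t)) 2 := by
  rw [memLp_two_iff_integrable_sq (Real.continuous_sqrt.comp_aestronglyMeasurable hU.1)]
  exact hU.congr (Filter.Eventually.of_forall fun t => (Real.sq_sqrt (h0 t)).symm)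

lemma continuous_ee {a S : ℝ × ℝ → ℝ} (ha : Continuous a) (hS : Continuous S) (lam : ℝ) :
    Continuous (ee lam S a) := by
  unfold ee; fun_prop

lemma continuous_Et {a S : ℝ × ℝ → ℝ} (ha : Continuous a) (hS : Continuous S) (lam t : ℝ) :
    Continuous (Et lam S a t) := by
  unfold Et
  have h := continuous_ee ha hS lam
  exact h.mul (Complex.continuous_conj.comp (h.comp (by fun_prop)))

lemma integral_J (C : ℝ) {L : ℝ} (hL : L ≠ 0) :
    Integrable (fun s : ℝ => C * (1 + (L * s) ^ 2)⁻¹) ∧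
    ∫ s : ℝ, C * (1 + (L * s) ^ 2)⁻¹ = C * (Real.pi / |L|) := by
  constructor
  · exact ((integrable_comp_mul_left_iff (fun x : ℝ => (1 + x ^ 2)⁻¹) hL).mpr integrable_inv_one_add_sq).const_mul C
  · rw [integral_const_mul, Measure.integral_comp_mul_left (fun x : ℝ => (1 + x ^ 2)⁻¹) L,
      integral_univ_inv_one_add_sq, smul_eq_mul, abs_inv]
    ring

theorem core {a S : ℝ × ℝ → ℝ} (ha : ContDiff ℝ (⊤ : ℕ∞) a) (hacs : HasCompactSupport a)
    (hS : ContDiff ℝ (⊤ : ℕ∞) S) {c : ℝ} (hc : 0 < c)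
    (hD : ∀ p ∈ convexHull ℝ (tsupport a), c ≤ |dd (0, 1) (dd (1, 0) (dd (-1, 1) S)) p|) :
    ∃ C : ℝ, 0 ≤ C ∧ ∀ lam : ℝ, 1 ≤ |lam| → ∀ f g h : ℝ → ℂ,
      Continuous f → HasCompactSupport f → Continuous g → HasCompactSupport g →
      Continuous h → HasCompactSupport h →
      ‖∫ x, ∫ y, f x * (ee lam S a (x, y) * (g y * h (x + y)))‖ ≤
        C * |lam| ^ (-(1 / 6) : ℝ) * √(∫ x, ‖f x‖ ^ 2) * √(∫ x, ‖g x‖ ^ 2) * √(∫ x, ‖h x‖ ^ 2) := by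
  obtain ⟨C, hC, hker⟩ := kernel_bound ha hacs hS hc hD
  obtain ⟨M, hM, hMa⟩ := exists_bd' ha hacs subset_rfl
  obtain ⟨R, hR0, hR⟩ := bound_of_hcs hacs
  refine ⟨√(2 * M ^ 2 + √(C * Real.pi)), by positivity, ?_⟩
  intro lam hlam f g h cf sf cg sg ch sh
  have hL0 : 0 < |lam| := by linarith
  have hl : lam ≠ 0 := abs_pos.mp hL0
  have cee := continuous_ee ha.continuous hS.continuous lam
  have hee0 : ∀ p, ee lam S a p ≠ 0 → a p ≠ 0 := by
    intro p hp h0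
    apply hp
    simp [ee, h0]
  have see : HasCompactSupport (ee lam S a) := hcs_of_bound R (fun p hp => hR p (hee0 p hp))
  have hEM : ∀ t p, ‖Et lam S a t p‖ ≤ M ^ 2 := by
    intro t p
    unfold Et
    rw [norm_mul, RCLike.norm_conj, norm_ee, norm_ee, sq]
    exact mul_le_mul (hMa _) (hMa _) (abs_nonneg _) hM
  have tt := TT (k := fun p => ee lam S a p * (g p.2 * h (p.1 + p.2))) (by fun_prop)
    see.mul_right cf sf
  simp only at tt
  set g2 := ∫ x, ‖g x‖ ^ 2 with hg2
  set h2 := ∫ x, ‖h x‖ ^ 2 with hh2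
  set f2 := ∫ x, ‖f x‖ ^ 2 with hf2
  have g20 : 0 ≤ g2 := integral_nonneg fun x => by positivity
  have h20 : 0 ≤ h2 := integral_nonneg fun x => by positivity
  have f20 : 0 ≤ f2 := integral_nonneg fun x => by positivity
  have isq : ∀ u : ℝ → ℂ, Continuous u → HasCompactSupport u → Integrable (fun y => ‖u y‖ ^ 2) := by
    intro u cu su
    apply Continuous.integrable_of_hasCompactSupport (by fun_prop)
    exact su.mono (fun z hz h => by simp [h] at hz)
  -- autocorrelations
  have cG : ∀ u : ℝ → ℂ, Continuous u → ∀ t, Continuous (fun y => u y * (starRingEnd ℂ) (u (y + t))) := by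
    intro u cu t
    exact cu.mul (Complex.continuous_conj.comp (cu.comp (by fun_prop)))
  have l1 : ∀ u : ℝ → ℂ, Continuous u → HasCompactSupport u → ∀ t,
      ∫ y, ‖u y * (starRingEnd ℂ) (u (y + t))‖ ≤ ∫ y, ‖u y‖ ^ 2 := by
    intro u cu su t
    have i1 := isq u cu su
    have i2 : Integrable (fun y => ‖u (y + t)‖ ^ 2) := i1.comp_add_right t
    have e : ∫ y, (‖u y‖ ^ 2 + ‖u (y + t)‖ ^ 2) / 2 = ∫ y, ‖u y‖ ^ 2 := by
      rw [integral_div, integral_add i1 i2, integral_add_right_eq_self (fun z => ‖u z‖ ^ 2) t]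
      ring
    rw [← e]
    refine integral_mono_of_nonneg (Filter.Eventually.of_forall fun s => norm_nonneg _)
      ((i1.add i2).div_const 2) (Filter.Eventually.of_forall fun y => ?_)
    simp only [norm_mul, RCLike.norm_conj]
    nlinarith [sq_nonneg (‖u y‖ - ‖u (y + t)‖)]
  set B : ℝ → ℂ := fun t => ∫ y, ∫ z, (g y * (starRingEnd ℂ) (g (y + t))) *
    (Et lam S a t (z - y, y) * (h z * (starRingEnd ℂ) (h (z + t)))) with hB
  have eB : ∀ t, ∫ x, ∫ y, ee lam S a (x, y) * (g y * h (x + y)) *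
      (starRingEnd ℂ) (ee lam S a (x, y + t) * (g (y + t) * h (x + (y + t)))) = B t := by
    intro t
    have i1 : Integrable (fun p : ℝ × ℝ => ee lam S a (p.1, p.2) * (g p.2 * h (p.1 + p.2)) *
      (starRingEnd ℂ) (ee lam S a (p.1, p.2 + t) * (g (p.2 + t) * h (p.1 + (p.2 + t))))) := by
      apply Continuous.integrable_of_hasCompactSupport
      · exact ((cee.comp (by fun_prop)).mul (by fun_prop)).mul
          (Complex.continuous_conj.comp ((cee.comp (by fun_prop)).mul (by fun_prop)))
      · exact see.mono (fun p hp h => by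
          apply hp
          have : ee lam S a (p.1, p.2) = 0 := h
          simp [this])
    rw [integral_integral_swap (f := fun x y => ee lam S a (x, y) * (g y * h (x + y)) *
      (starRingEnd ℂ) (ee lam S a (x, y + t) * (g (y + t) * h (x + (y + t))))) i1]
    simp only [hB]
    congr 1
    ext y
    rw [← integral_sub_right_eq_self _ y]
    congr 1
    ext z
    unfold Et
    simp only [map_mul]
    rw [show z - y + y = z by ring, show z - y + (y + t) = z + t by ring]
    ring
  simp_rw [eB] at tt
  obtain ⟨iU, eU⟩ := corr cg sg
  obtain ⟨iW, eW⟩ := corr ch sh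
  set U : ℝ → ℝ := fun t => ∫ y, ‖g y * (starRingEnd ℂ) (g (y + t))‖ ^ 2 with hU
  set W : ℝ → ℝ := fun t => ∫ y, ‖h y * (starRingEnd ℂ) (h (y + t))‖ ^ 2 with hW
  have U0 : ∀ t, 0 ≤ U t := fun t => integral_nonneg fun x => by positivity
  have W0 : ∀ t, 0 ≤ W t := fun t => integral_nonneg fun x => by positivity
  have triv : ∀ t, ‖B t‖ ≤ M ^ 2 * g2 * h2 := by
    intro t
    have ig : Integrable (fun y => ‖g y * (starRingEnd ℂ) (g (y + t))‖) :=
      (Continuous.integrable_of_hasCompactSupport (cG g cg t) sg.mul_right).norm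
    have ih : Integrable (fun y => ‖h y * (starRingEnd ℂ) (h (y + t))‖) :=
      (Continuous.integrable_of_hasCompactSupport (cG h ch t) sh.mul_right).norm
    have inner : ∀ y, ‖∫ z, (g y * (starRingEnd ℂ) (g (y + t))) *
        (Et lam S a t (z - y, y) * (h z * (starRingEnd ℂ) (h (z + t))))‖ ≤
        ‖g y * (starRingEnd ℂ) (g (y + t))‖ * (M ^ 2 * h2) := by
      intro y
      rw [integral_const_mul, norm_mul]
      refine mul_le_mul_of_nonneg_left ?_ (norm_nonneg _)
      refine (norm_integral_le_of_norm_le (ih.const_mul (M ^ 2)) (Filter.Eventually.of_forall fun z => ?_)).trans ?_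
      · rw [norm_mul]
        exact mul_le_mul_of_nonneg_right (hEM _ _) (norm_nonneg _)
      · rw [integral_const_mul]
        exact mul_le_mul_of_nonneg_left (l1 h ch sh t) (by positivity)
    refine (norm_integral_le_of_norm_le (ig.mul_const (M ^ 2 * h2)) (Filter.Eventually.of_forall inner)).trans ?_
    rw [integral_mul_const]
    refine (mul_le_mul_of_nonneg_right (l1 g cg sg t) (by positivity)).trans (le_of_eq ?_)
    ring
  have osc : ∀ t, t ≠ 0 → ‖B t‖ ^ 2 ≤ U t * (C * (Real.pi / |lam * t|) * W t) := by
    intro t ht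
    obtain ⟨iJ, eJ⟩ := integral_J C (mul_ne_zero hl ht)
    have := Bil (E := fun p : ℝ × ℝ => Et lam S a t (p.2 - p.1, p.1))
      (G := fun y => g y * (starRingEnd ℂ) (g (y + t))) (H := fun y => h y * (starRingEnd ℂ) (h (y + t)))
      ((continuous_Et ha.continuous hS.continuous lam t).comp (by fun_prop))
      (by
        refine hcs_of_bound (2 * R) (fun p hp => ?_)
        have h1 := norm_le_two (hR _ (hee0 _ (left_ne_zero_of_mul hp)))
        simp only [abs_le, Prod.norm_def, Real.norm_eq_abs, sup_le_iff] at *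
        refine ⟨⟨?_, ?_⟩, ?_, ?_⟩ <;> linarith [h1.1.1, h1.1.2, h1.2.1, h1.2.2])
      (cG g cg t) sg.mul_right (cG h ch t) sh.mul_right iJ (fun z s => hker lam hl z t s)
    rw [eJ] at this
    exact this
  set δ : ℝ := |lam| ^ (-(1 / 3) : ℝ) with hδ
  have δ0 : 0 < δ := Real.rpow_pos_of_pos hL0 _
  have δ3 : |lam| * δ ^ 3 = 1 := by
    rw [hδ, ← Real.rpow_natCast, ← Real.rpow_mul hL0.le]
    norm_num
    rw [Real.rpow_neg_one]
    exact mul_inv_cancel₀ hL0.ne'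
  have large : ∀ t, δ < |t| → ‖B t‖ ≤ √(C * Real.pi) * δ * (√(U t) * √(W t)) := by
    intro t ht
    have t0 : t ≠ 0 := abs_pos.mp (δ0.trans ht)
    have h1 : Real.pi / |lam * t| ≤ Real.pi * δ ^ 2 := by
      rw [abs_mul, div_le_iff₀ (by positivity)]
      have : 1 ≤ δ ^ 2 * (|lam| * |t|) := by
        rw [← δ3]
        have : |lam| * δ ^ 2 * δ ≤ |lam| * δ ^ 2 * |t| := mul_le_mul_of_nonneg_left ht.le (by positivity)
        nlinarith
      nlinarith [Real.pi_pos]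
    refine (pow_le_pow_iff_left₀ (norm_nonneg _) (by positivity) two_ne_zero).mp ?_
    calc ‖B t‖ ^ 2 ≤ U t * (C * (Real.pi / |lam * t|) * W t) := osc t t0
      _ ≤ U t * (C * (Real.pi * δ ^ 2) * W t) := by
          have := U0 t
          have := W0 t
          gcongr
      _ = (√(C * Real.pi) * δ * (√(U t) * √(W t))) ^ 2 := by
          rw [mul_pow, mul_pow, mul_pow, Real.sq_sqrt (by positivity), Real.sq_sqrt (U0 t), Real.sq_sqrt (W0 t)]
          ring
  have mU := memLp_sqrt iU U0
  have mW := memLp_sqrt iW W0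
  have iUW : Integrable (fun t => √(U t) * √(W t)) := mU.integrable_mul mW
  have cUW : ∫ t, √(U t) * √(W t) ≤ g2 * h2 := by
    have := cs_norm mU mW
    simp only [Real.norm_eq_abs, abs_of_nonneg (Real.sqrt_nonneg _), Real.sq_sqrt (U0 _), Real.sq_sqrt (W0 _)] at this
    rwa [eU, eW, Real.sqrt_sq g20, Real.sqrt_sq h20] at this
  have main : ∫ t, ‖B t‖ ≤ (2 * M ^ 2 + √(C * Real.pi)) * δ * (g2 * h2) := by
    have i1 : Integrable ((Set.Icc (-δ) δ).indicator (fun _ : ℝ => M ^ 2 * g2 * h2)) :=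
      (integrable_indicator_iff measurableSet_Icc).mpr (integrableOn_const (by simp))
    refine (integral_mono_of_nonneg (Filter.Eventually.of_forall fun t => norm_nonneg _)
      (i1.add (iUW.const_mul (√(C * Real.pi) * δ))) (Filter.Eventually.of_forall fun t => ?_)).trans ?_
    · simp only [Pi.add_apply]
      by_cases ht : t ∈ Set.Icc (-δ) δ
      · rw [Set.indicator_of_mem ht]
        refine (triv t).trans ?_
        have : 0 ≤ √(C * Real.pi) * δ * (√(U t) * √(W t)) := by positivity
        linarith
      · rw [Set.indicator_of_notMem ht, zero_add]
        apply large
        by_contra h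
        exact ht (abs_le.mp (not_lt.mp h))
    · simp only [Pi.add_apply]
      rw [integral_add i1 (iUW.const_mul _), integral_indicator measurableSet_Icc, setIntegral_const,
        integral_const_mul, Real.volume_real_Icc_of_le (by linarith), smul_eq_mul]
      have : √(C * Real.pi) * δ * ∫ t, √(U t) * √(W t) ≤ √(C * Real.pi) * δ * (g2 * h2) :=
        mul_le_mul_of_nonneg_left cUW (by positivity)
      linarith
  have δ6 : (|lam| ^ (-(1 / 6) : ℝ)) ^ 2 = δ := by
    rw [hδ, ← Real.rpow_natCast, ← Real.rpow_mul hL0.le]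
    norm_num
  refine (pow_le_pow_iff_left₀ (norm_nonneg _) (by positivity) two_ne_zero).mp ?_
  calc _ ≤ f2 * ∫ t, ‖B t‖ := tt
    _ ≤ f2 * ((2 * M ^ 2 + √(C * Real.pi)) * δ * (g2 * h2)) := mul_le_mul_of_nonneg_left main f20
    _ = _ := by
      rw [mul_pow, mul_pow, mul_pow, mul_pow, δ6, Real.sq_sqrt f20, Real.sq_sqrt g20, Real.sq_sqrt h20,
        Real.sq_sqrt (by positivity)]
      ring


def nn (f : ℝ → ℂ) : ℝ := (eLpNorm f 2 volume).toReal

def PP (f : ℝ → ℂ) : Prop := StronglyMeasurable f ∧ MemLp f 2 volume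

lemma nn_nonneg (f : ℝ → ℂ) : 0 ≤ nn f := ENNReal.toReal_nonneg

lemma sqrt_eq_nn {f : ℝ → ℂ} (hf : MemLp f 2 volume) : √(∫ x, ‖f x‖ ^ 2) = nn f := by
  unfold nn
  rw [hf.eLpNorm_eq_integral_rpow_norm (by norm_num) (by norm_num), ENNReal.toReal_ofReal (by positivity),
    Real.sqrt_eq_rpow]
  norm_num

lemma PP_of_cc {f : ℝ → ℂ} (hf : Continuous f) (hc : HasCompactSupport f) : PP f :=
  ⟨hf.stronglyMeasurable, hf.memLp_of_hasCompactSupport hc⟩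

lemma PP.sub {f g : ℝ → ℂ} (hf : PP f) (hg : PP g) : PP (f - g) :=
  ⟨hf.1.sub hg.1, hf.2.sub hg.2⟩

lemma lint_cs {u v : ℝ → ℂ} (hu : StronglyMeasurable u) (hv : StronglyMeasurable v) :
    ∫⁻ x, ‖u x‖ₑ * ‖v x‖ₑ ≤ eLpNorm u 2 volume * eLpNorm v 2 volume := by
  have := ENNReal.lintegral_mul_le_Lp_mul_Lq (volume : Measure ℝ) Real.HolderConjugate.two_two
    (f := fun x => ‖u x‖ₑ) (g := fun x => ‖v x‖ₑ) hu.enorm.aemeasurable hv.enorm.aemeasurable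
  rw [eLpNorm_eq_lintegral_rpow_enorm_toReal (by norm_num) (by norm_num),
    eLpNorm_eq_lintegral_rpow_enorm_toReal (by norm_num) (by norm_num)]
  simpa using this

def GG (E : ℝ × ℝ → ℂ) (f g h : ℝ → ℂ) (p : ℝ × ℝ) : ℂ :=
  f p.1 * (E p * (g p.2 * h (p.1 + p.2)))

lemma GG_sm {E : ℝ × ℝ → ℂ} (hE : Continuous E) {f g h : ℝ → ℂ} (hf : PP f) (hg : PP g) (hh : PP h) :
    StronglyMeasurable (GG E f g h) := by
  unfold GG
  have h1 := hf.1.comp_measurable (measurable_fst : Measurable (Prod.fst : ℝ × ℝ → ℝ))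
  have h2 := hg.1.comp_measurable (measurable_snd : Measurable (Prod.snd : ℝ × ℝ → ℝ))
  have h3 := hh.1.comp_measurable (measurable_fst.add measurable_snd :
    Measurable (fun p : ℝ × ℝ => p.1 + p.2))
  exact h1.mul (hE.stronglyMeasurable.mul (h2.mul h3))

lemma triv_lint {E : ℝ × ℝ → ℂ} (hE : Continuous E) {M R : ℝ}
    (hM : ∀ p, ‖E p‖ ≤ M) (hR : ∀ p : ℝ × ℝ, E p ≠ 0 → |p.1| ≤ R)
    {f g h : ℝ → ℂ} (hf : PP f) (hg : PP g) (hh : PP h) :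
    ∫⁻ p, ‖GG E f g h p‖ₑ ≤ ENNReal.ofReal M *
      (eLpNorm f 2 volume * eLpNorm ((Set.Icc (-R) R).indicator (fun _ => (1 : ℂ))) 2 volume) *
      (eLpNorm g 2 volume * eLpNorm h 2 volume) := by
  set ι : ℝ → ℂ := (Set.Icc (-R) R).indicator (fun _ => (1 : ℂ)) with hι
  have hιm : StronglyMeasurable ι := stronglyMeasurable_const.indicator measurableSet_Icc
  have hE' : ∀ p : ℝ × ℝ, ‖E p‖ₑ ≤ ENNReal.ofReal M * ‖ι p.1‖ₑ := by
    intro p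
    by_cases h0 : E p = 0
    · simp [h0]
    · have : p.1 ∈ Set.Icc (-R) R := by
        have := abs_le.mp (hR p h0); exact this
      simp only [hι, Set.indicator_of_mem this, enorm_one, mul_one]
      rw [← ofReal_norm]
      exact ENNReal.ofReal_le_ofReal (hM p)
  rw [Measure.volume_eq_prod, lintegral_prod _ (GG_sm hE hf hg hh).enorm.aemeasurable]
  calc ∫⁻ x, ∫⁻ y, ‖GG E f g h (x, y)‖ₑ
      ≤ ∫⁻ x, (ENNReal.ofReal M * (eLpNorm g 2 volume * eLpNorm h 2 volume)) * (‖f x‖ₑ * ‖ι x‖ₑ) := by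
        apply lintegral_mono
        intro x
        have hx : StronglyMeasurable (fun y => h (x + y)) :=
          hh.1.comp_measurable (measurable_const_add x)
        have hn : eLpNorm (fun y => h (x + y)) 2 volume = eLpNorm h 2 volume :=
          eLpNorm_comp_measurePreserving (g := h) hh.1.aestronglyMeasurable
            (measurePreserving_add_left volume x)
        calc ∫⁻ y, ‖GG E f g h (x, y)‖ₑ
            ≤ ∫⁻ y, (‖f x‖ₑ * (ENNReal.ofReal M * ‖ι x‖ₑ)) * (‖g y‖ₑ * ‖h (x + y)‖ₑ) := by
              apply lintegral_mono
              intro y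
              simp only [GG, enorm_mul]
              rw [← mul_assoc]
              gcongr
              exact hE' (x, y)
          _ = (‖f x‖ₑ * (ENNReal.ofReal M * ‖ι x‖ₑ)) * ∫⁻ y, (‖g y‖ₑ * ‖h (x + y)‖ₑ) := by
              rw [lintegral_const_mul]
              exact hg.1.enorm.mul hx.enorm
          _ ≤ (‖f x‖ₑ * (ENNReal.ofReal M * ‖ι x‖ₑ)) * (eLpNorm g 2 volume * eLpNorm h 2 volume) := by
              gcongr
              rw [← hn]
              exact lint_cs hg.1 hx
          _ = _ := by ring
    _ = (ENNReal.ofReal M * (eLpNorm g 2 volume * eLpNorm h 2 volume)) * ∫⁻ x, (‖f x‖ₑ * ‖ι x‖ₑ) := by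
        rw [lintegral_const_mul]
        exact hf.1.enorm.mul hιm.enorm
    _ ≤ (ENNReal.ofReal M * (eLpNorm g 2 volume * eLpNorm h 2 volume)) *
          (eLpNorm f 2 volume * eLpNorm ι 2 volume) := by
        gcongr
        exact lint_cs hf.1 hιm
    _ = _ := by ring

lemma triv {E : ℝ × ℝ → ℂ} (hE : Continuous E) {M R : ℝ}
    (hM : ∀ p, ‖E p‖ ≤ M) (hR : ∀ p : ℝ × ℝ, E p ≠ 0 → |p.1| ≤ R) :
    ∃ M0, 0 ≤ M0 ∧ ∀ f g h : ℝ → ℂ, PP f → PP g → PP h →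
      Integrable (GG E f g h) ∧ ‖∫ p, GG E f g h p‖ ≤ M0 * nn f * nn g * nn h := by
  have hM0 : 0 ≤ M := le_trans (norm_nonneg _) (hM 0)
  have hι : MemLp ((Set.Icc (-R) R).indicator (fun _ => (1 : ℂ))) 2 (volume : Measure ℝ) := by
    apply memLp_indicator_const _ measurableSet_Icc
    right
    simp
  refine ⟨M * nn ((Set.Icc (-R) R).indicator (fun _ => (1 : ℂ))), mul_nonneg hM0 (nn_nonneg _), ?_⟩
  intro f g h hf hg hh
  have h1 := triv_lint hE hM hR hf hg hh
  have hfin : ENNReal.ofReal M *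
      (eLpNorm f 2 volume * eLpNorm ((Set.Icc (-R) R).indicator (fun _ => (1 : ℂ))) 2 volume) *
      (eLpNorm g 2 volume * eLpNorm h 2 volume) ≠ ⊤ := by
    have a1 := hf.2.2.ne
    have a2 := hg.2.2.ne
    have a3 := hh.2.2.ne
    have a4 := hι.2.ne
    exact ENNReal.mul_ne_top (ENNReal.mul_ne_top ENNReal.ofReal_ne_top (ENNReal.mul_ne_top a1 a4))
      (ENNReal.mul_ne_top a2 a3)
  refine ⟨⟨(GG_sm hE hf hg hh).aestronglyMeasurable, lt_of_le_of_lt h1 hfin.lt_top⟩, ?_⟩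
  have h2 := enorm_integral_le_lintegral_enorm (μ := volume) (GG E f g h)
  have h3 := ENNReal.toReal_mono hfin (h2.trans h1)
  rw [toReal_enorm] at h3
  refine h3.trans (le_of_eq ?_)
  simp only [ENNReal.toReal_mul, ENNReal.toReal_ofReal hM0, nn]
  ring

lemma dens (Λ : (ℝ → ℂ) → ℂ) {M B : ℝ} (hM : 0 ≤ M) (hB : 0 ≤ B)
    (hadd : ∀ f f', PP f → PP f' → Λ f = Λ (f - f') + Λ f')
    (hbd : ∀ f, PP f → ‖Λ f‖ ≤ M * nn f)
    (hcc : ∀ f, Continuous f → HasCompactSupport f → ‖Λ f‖ ≤ B * nn f) :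
    ∀ f, PP f → ‖Λ f‖ ≤ B * nn f := by
  intro f hf
  have key : ∀ ε : ℝ, 0 < ε → ‖Λ f‖ ≤ B * nn f + (M + B) * ε := by
    intro ε hε
    obtain ⟨g, hg1, hg2, hg3, hg4⟩ := hf.2.exists_hasCompactSupport_eLpNorm_sub_le (by norm_num)
      (ε := ENNReal.ofReal ε) (by simpa using hε)
    have hPg := PP_of_cc hg3 hg1
    have e1 : nn (f - g) ≤ ε := by
      have := ENNReal.toReal_mono ENNReal.ofReal_ne_top hg2
      rwa [ENNReal.toReal_ofReal hε.le] at this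
    have e2 : nn g ≤ nn f + ε := by
      have : eLpNorm g 2 volume ≤ eLpNorm f 2 volume + ENNReal.ofReal ε := by
        calc eLpNorm g 2 volume = eLpNorm (f - (f - g)) 2 volume := by simp
          _ ≤ eLpNorm f 2 volume + eLpNorm (f - g) 2 volume :=
            eLpNorm_sub_le hf.2.1 (hf.sub hPg).2.1 (by norm_num)
          _ ≤ _ := by gcongr
      have := ENNReal.toReal_mono (by simp [hf.2.2.ne]) this
      rwa [ENNReal.toReal_add hf.2.2.ne ENNReal.ofReal_ne_top, ENNReal.toReal_ofReal hε.le] at this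
    calc ‖Λ f‖ = ‖Λ (f - g) + Λ g‖ := by rw [← hadd f g hf hPg]
      _ ≤ ‖Λ (f - g)‖ + ‖Λ g‖ := norm_add_le _ _
      _ ≤ M * ε + B * (nn f + ε) := by
          gcongr
          · exact (hbd _ (hf.sub hPg)).trans (by gcongr)
          · exact (hcc g hg3 hg1).trans (by gcongr)
      _ = _ := by ring
  apply le_of_forall_pos_le_add
  intro ε hε
  have hp : 0 < M + B + 1 := by positivity
  refine (key (ε / (M + B + 1)) (by positivity)).trans ?_
  gcongr
  rw [mul_div_assoc', div_le_iff₀ hp]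
  nlinarith

lemma dens3 {E : ℝ × ℝ → ℂ} (hE : Continuous E) {M R B : ℝ} (hB : 0 ≤ B)
    (hM : ∀ p, ‖E p‖ ≤ M) (hR : ∀ p : ℝ × ℝ, E p ≠ 0 → |p.1| ≤ R)
    (hcc : ∀ f g h : ℝ → ℂ, Continuous f → HasCompactSupport f → Continuous g → HasCompactSupport g →
      Continuous h → HasCompactSupport h → ‖∫ p, GG E f g h p‖ ≤ B * nn f * nn g * nn h) :
    ∀ f g h : ℝ → ℂ, PP f → PP g → PP h → ‖∫ p, GG E f g h p‖ ≤ B * nn f * nn g * nn h := by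
  obtain ⟨M0, hM0, H⟩ := triv hE hM hR
  have s1 : ∀ f g h : ℝ → ℂ, Continuous f → HasCompactSupport f → Continuous g → HasCompactSupport g →
      PP h → ‖∫ p, GG E f g h p‖ ≤ B * nn f * nn g * nn h := by
    intro f g h hf hf' hg hg' hh
    have Pf := PP_of_cc hf hf'
    have Pg := PP_of_cc hg hg'
    refine dens (fun h => ∫ p, GG E f g h p) (M := M0 * nn f * nn g) (B := B * nn f * nn g) ?_ ?_ ?_ ?_ ?_ h hh
    · have := nn_nonneg f; have := nn_nonneg g; positivity
    · have := nn_nonneg f; have := nn_nonneg g; positivity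
    · intro h h' Ph Ph'
      rw [← integral_add (H f g _ Pf Pg (Ph.sub Ph')).1 (H f g _ Pf Pg Ph').1]
      congr 1; ext p; simp only [GG, Pi.sub_apply]; ring
    · intro h Ph; exact (H f g h Pf Pg Ph).2
    · intro h hh hh'; exact hcc f g h hf hf' hg hg' hh hh'
  have s2 : ∀ f g h : ℝ → ℂ, Continuous f → HasCompactSupport f → PP g →
      PP h → ‖∫ p, GG E f g h p‖ ≤ B * nn f * nn g * nn h := by
    intro f g h hf hf' Pg Ph
    have Pf := PP_of_cc hf hf'
    have := dens (fun g => ∫ p, GG E f g h p) (M := M0 * nn f * nn h) (B := B * nn f * nn h) ?_ ?_ ?_ ?_ ?_ g Pg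
    · exact this.trans (le_of_eq (by ring))
    · have := nn_nonneg f; have := nn_nonneg h; positivity
    · have := nn_nonneg f; have := nn_nonneg h; positivity
    · intro g g' Pg Pg'
      rw [← integral_add (H f _ h Pf (Pg.sub Pg') Ph).1 (H f _ h Pf Pg' Ph).1]
      congr 1; ext p; simp only [GG, Pi.sub_apply]; ring
    · intro g Pg; exact (H f g h Pf Pg Ph).2.trans (le_of_eq (by ring))
    · intro g hg hg'; exact (s1 f g h hf hf' hg hg' Ph).trans (le_of_eq (by ring))
  intro f g h Pf Pg Ph
  have := dens (fun f => ∫ p, GG E f g h p) (M := M0 * nn g * nn h) (B := B * nn g * nn h) ?_ ?_ ?_ ?_ ?_ f Pf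
  · exact this.trans (le_of_eq (by ring))
  · have := nn_nonneg g; have := nn_nonneg h; positivity
  · have := nn_nonneg g; have := nn_nonneg h; positivity
  · intro f f' Pf Pf'
    rw [← integral_add (H _ g h (Pf.sub Pf') Pg Ph).1 (H _ g h Pf' Pg Ph).1]
    congr 1; ext p; simp only [GG, Pi.sub_apply]; ring
  · intro f Pf; exact (H f g h Pf Pg Ph).2.trans (le_of_eq (by ring))
  · intro f hf hf'; exact (s2 f g h hf hf' Pg Ph).trans (le_of_eq (by ring))

theorem coreLp {a S : ℝ × ℝ → ℝ} {c : ℝ} (ha : ContDiff ℝ (⊤ : ℕ∞) a) (hacs : HasCompactSupport a)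
    (hS : ContDiff ℝ (⊤ : ℕ∞) S) (hc : 0 < c)
    (hD : ∀ p ∈ convexHull ℝ (tsupport a), c ≤ |dd (0, 1) (dd (1, 0) (dd (-1, 1) S)) p|) :
    ∃ C, 0 ≤ C ∧ ∀ lam : ℝ, 1 ≤ |lam| → ∀ f g h : ℝ → ℂ, PP f → PP g → PP h →
      ‖∫ p, GG (ee lam S a) f g h p‖ ≤ C * |lam| ^ (-(1 / 6) : ℝ) * nn f * nn g * nn h := by
  obtain ⟨C, hC, H⟩ := core ha hacs hS hc hD
  obtain ⟨R, hR0, hR⟩ := bound_of_hcs hacs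
  obtain ⟨N, hN0, hN⟩ := exists_bd' ha hacs subset_rfl
  refine ⟨C, hC, fun lam hl => ?_⟩
  have hE : Continuous (ee lam S a) := continuous_ee ha.continuous hS.continuous lam
  have hM : ∀ p, ‖ee lam S a p‖ ≤ N := fun p => by rw [norm_ee]; exact hN p
  have hR' : ∀ p : ℝ × ℝ, ee lam S a p ≠ 0 → |p.1| ≤ R := by
    intro p hp
    refine (norm_le_two (hR p ?_)).1
    intro h0
    apply hp
    simp [ee, h0]
  apply dens3 hE (by positivity) hM hR'
  intro f g h hf hf' hg hg' hh hh'
  obtain ⟨M0, hM0, HT⟩ := triv hE hM hR'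
  have hint := (HT f g h (PP_of_cc hf hf') (PP_of_cc hg hg') (PP_of_cc hh hh')).1
  rw [Measure.volume_eq_prod] at hint ⊢
  rw [integral_prod _ hint, ← sqrt_eq_nn (PP_of_cc hf hf').2, ← sqrt_eq_nn (PP_of_cc hg hg').2,
    ← sqrt_eq_nn (PP_of_cc hh hh').2]
  exact H lam hl f g h hf hf' hg hg' hh hh'

lemma dd_comp (Ψ : (ℝ × ℝ) ≃L[ℝ] (ℝ × ℝ)) (v : ℝ × ℝ) (G : ℝ × ℝ → ℝ) :
    dd v (G ∘ Ψ) = (dd (Ψ v) G) ∘ Ψ := by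
  ext p
  simp [dd, ContinuousLinearEquiv.comp_right_fderiv]

lemma dd_smul_left (k : ℝ) (w : ℝ × ℝ) (G : ℝ × ℝ → ℝ) : dd (k • w) G = fun p => k * dd w G p := by
  ext p
  simp [dd]

lemma dd_mul_right (k : ℝ) (w : ℝ × ℝ) {G : ℝ × ℝ → ℝ} (hG : ContDiff ℝ (⊤ : ℕ∞) G) :
    dd w (fun p => k * G p) = fun p => k * dd w G p := by
  ext p
  have : DifferentiableAt ℝ G p := (hG.differentiable (by simp)).differentiableAt
  simp only [dd]
  rw [fderiv_const_mul this]
  simp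

lemma scal {c : ℝ} (hc : c ≠ 0) : ∃ K, 0 ≤ K ∧ ∀ f : ℝ → ℂ, PP f →
    PP (fun x => f (c * x)) ∧ nn (fun x => f (c * x)) = K * nn f := by
  have key : ∀ f : ℝ → ℂ, PP f → eLpNorm (fun x => f (c * x)) 2 volume =
      (ENNReal.ofReal |c⁻¹|) ^ (1 / (2 : ENNReal)).toReal * eLpNorm f 2 volume := by
    intro f hf
    have := eLpNorm_map_measure (p := 2) (μ := volume) (f := fun x : ℝ => c * x) (g := f)
      hf.1.aestronglyMeasurable (measurable_const_mul c).aemeasurable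
    rw [Real.map_volume_mul_left hc, eLpNorm_smul_measure_of_ne_top (by norm_num)] at this
    rw [smul_eq_mul] at this
    exact this.symm
  refine ⟨((ENNReal.ofReal |c⁻¹|) ^ (1 / (2 : ENNReal)).toReal).toReal, ENNReal.toReal_nonneg, ?_⟩
  intro f hf
  have hm : StronglyMeasurable (fun x => f (c * x)) := hf.1.comp_measurable (measurable_const_mul c)
  refine ⟨⟨hm, hm.aestronglyMeasurable, ?_⟩, ?_⟩
  · rw [key f hf]
    exact ENNReal.mul_lt_top (ENNReal.rpow_lt_top_of_nonneg ENNReal.toReal_nonneg ENNReal.ofReal_ne_top)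
      hf.2.2
  · unfold nn
    rw [key f hf, ENNReal.toReal_mul]

lemma chvar (Ψ : (ℝ × ℝ) ≃L[ℝ] (ℝ × ℝ)) : ∃ K : ℝ, 0 ≤ K ∧ ∀ G : ℝ × ℝ → ℂ,
    ‖∫ p, G (Ψ p)‖ = K * ‖∫ p, G p‖ := by
  have hdet : LinearMap.det (Ψ.toLinearEquiv : (ℝ × ℝ) →ₗ[ℝ] (ℝ × ℝ)) ≠ 0 :=
    (LinearEquiv.isUnit_det' Ψ.toLinearEquiv).ne_zero
  refine ⟨|(LinearMap.det (Ψ.toLinearEquiv : (ℝ × ℝ) →ₗ[ℝ] (ℝ × ℝ)))⁻¹|, abs_nonneg _, fun G => ?_⟩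
  have h1 := Measure.map_linearMap_addHaar_eq_smul_addHaar (volume : Measure (ℝ × ℝ)) hdet
  have h2 := integral_map_equiv (μ := (volume : Measure (ℝ × ℝ))) Ψ.toHomeomorph.toMeasurableEquiv G
  have h3 : (⇑(Ψ.toHomeomorph.toMeasurableEquiv) : ℝ × ℝ → ℝ × ℝ) =
      ⇑(Ψ.toLinearEquiv : (ℝ × ℝ) →ₗ[ℝ] (ℝ × ℝ)) := rfl
  rw [h3, h1, integral_smul_measure] at h2
  have h4 : ∫ p, G (Ψ p) = ∫ p, G ((Ψ.toLinearEquiv : (ℝ × ℝ) →ₗ[ℝ] (ℝ × ℝ)) p) := rfl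
  rw [h4, ← h2, norm_smul, ENNReal.toReal_ofReal (abs_nonneg _), Real.norm_eq_abs, abs_abs]

theorem abstr (Ψ : (ℝ × ℝ) ≃L[ℝ] (ℝ × ℝ)) {α β : ℝ} (hα : α ≠ 0) (hβ : β ≠ 0)
    {v₁ v₂ v₃ : ℝ × ℝ} (hv₁ : v₁ ≠ 0) (hv₂ : v₂ ≠ 0) (hv₃ : v₃ ≠ 0)
    (h1 : (Ψ v₁).1 = 0) (h2 : (Ψ v₂).2 = 0) (h3 : (Ψ v₃).1 + (Ψ v₃).2 = 0)
    {a S : ℝ × ℝ → ℝ} (ha : ContDiff ℝ (⊤ : ℕ∞) a) (hacs : HasCompactSupport a)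
    (hS : ContDiff ℝ (⊤ : ℕ∞) S)
    (hD : ∀ p ∈ convexHull ℝ (tsupport a), 1 ≤ |dd v₁ (dd v₂ (dd v₃ S)) p|) :
    ∃ C, ∀ lam : ℝ, 1 ≤ |lam| → ∀ f g h : ℝ → ℂ, PP f → PP g → PP h →
      ‖∫ p, ee lam S a p * f (α * (Ψ p).1) * g (β * (Ψ p).2) * h ((Ψ p).1 + (Ψ p).2)‖ ≤
        C * |lam| ^ (-(1 / 6) : ℝ) * nn f * nn g * nn h := by
  set S' : ℝ × ℝ → ℝ := S ∘ Ψ.symm with hS'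
  set a' : ℝ × ℝ → ℝ := a ∘ Ψ.symm with ha'
  have hSS : S = S' ∘ Ψ := by ext p; simp [hS']
  have hS'c : ContDiff ℝ (⊤ : ℕ∞) S' := hS.comp Ψ.symm.contDiff
  have ha'c : ContDiff ℝ (⊤ : ℕ∞) a' := ha.comp Ψ.symm.contDiff
  have ha's : HasCompactSupport a' := hacs.comp_homeomorph Ψ.symm.toHomeomorph
  have z1 : Ψ v₁ ≠ 0 := by simpa using hv₁
  have z2 : Ψ v₂ ≠ 0 := by simpa using hv₂
  have z3 : Ψ v₃ ≠ 0 := by simpa using hv₃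
  obtain ⟨k1, e1⟩ : ∃ k : ℝ, Ψ v₁ = k • ((0, 1) : ℝ × ℝ) :=
    ⟨(Ψ v₁).2, by ext <;> simp [h1]⟩
  obtain ⟨k2, e2⟩ : ∃ k : ℝ, Ψ v₂ = k • ((1, 0) : ℝ × ℝ) :=
    ⟨(Ψ v₂).1, by ext <;> simp [h2]⟩
  obtain ⟨k3, e3⟩ : ∃ k : ℝ, Ψ v₃ = k • ((-1, 1) : ℝ × ℝ) :=
    ⟨(Ψ v₃).2, by ext <;> simp; linarith⟩
  have k10 : k1 ≠ 0 := by rintro rfl; simp [e1] at z1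
  have k20 : k2 ≠ 0 := by rintro rfl; simp [e2] at z2
  have k30 : k3 ≠ 0 := by rintro rfl; simp [e3] at z3
  have hdd : ∀ q, dd v₁ (dd v₂ (dd v₃ S)) (Ψ.symm q) =
      k1 * k2 * k3 * dd (0, 1) (dd (1, 0) (dd (-1, 1) S')) q := by
    intro q
    rw [hSS, dd_comp, dd_comp, dd_comp, e1, e2, e3]
    simp only [Function.comp, ContinuousLinearEquiv.apply_symm_apply]
    have c1 : ContDiff ℝ (⊤ : ℕ∞) (dd (-1, 1) S') := dd_contDiff hS'c _
    have c2 : ContDiff ℝ (⊤ : ℕ∞) (dd (1, 0) (dd (-1, 1) S')) := dd_contDiff c1 _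
    rw [dd_smul_left k3, dd_smul_left k2, dd_mul_right k3 _ c1, dd_smul_left k1]
    have : (fun p => k2 * (fun p => k3 * dd (1, 0) (dd (-1, 1) S') p) p) =
        fun p => (k2 * k3) * dd (1, 0) (dd (-1, 1) S') p := by ext p; ring
    rw [this, dd_mul_right _ _ c2]
    ring
  have hk : 0 < |k1 * k2 * k3| := abs_pos.mpr (mul_ne_zero (mul_ne_zero k10 k20) k30)
  have hD' : ∀ q ∈ convexHull ℝ (tsupport a'), 1 / |k1 * k2 * k3| ≤
      |dd (0, 1) (dd (1, 0) (dd (-1, 1) S')) q| := by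
    intro q hq
    have hmem : Ψ.symm q ∈ convexHull ℝ (tsupport a) := by
      have : convexHull ℝ (tsupport a') ⊆ Ψ.symm ⁻¹' (convexHull ℝ (tsupport a)) := by
        apply convexHull_min
        · refine (tsupport_comp_subset_preimage a Ψ.symm.continuous).trans ?_
          exact Set.preimage_mono (subset_convexHull ℝ _)
        · exact (convex_convexHull ℝ (tsupport a)).linear_preimage
            (Ψ.symm.toLinearEquiv : (ℝ × ℝ) →ₗ[ℝ] (ℝ × ℝ))
      exact this hq
    have := hD _ hmem
    rw [hdd, abs_mul] at this
    rw [div_le_iff₀ hk]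
    linarith
  obtain ⟨C, hC, H⟩ := coreLp ha'c ha's hS'c (by positivity) hD'
  obtain ⟨K, hK, HK⟩ := chvar Ψ
  obtain ⟨Ka, hKa, HKa⟩ := scal hα
  obtain ⟨Kb, hKb, HKb⟩ := scal hβ
  refine ⟨K * C * Ka * Kb, fun lam hl f g h Pf Pg Ph => ?_⟩
  obtain ⟨Pf', nf⟩ := HKa f Pf
  obtain ⟨Pg', ng⟩ := HKb g Pg
  have hG := HK (GG (ee lam S' a') (fun x => f (α * x)) (fun x => g (β * x)) h)
  have hH := H lam hl _ _ h Pf' Pg' Ph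
  have heq : ∀ p, GG (ee lam S' a') (fun x => f (α * x)) (fun x => g (β * x)) h (Ψ p) =
      ee lam S a p * f (α * (Ψ p).1) * g (β * (Ψ p).2) * h ((Ψ p).1 + (Ψ p).2) := by
    intro p
    simp only [GG, ee, hS', ha', Function.comp, ContinuousLinearEquiv.symm_apply_apply]
    ring
  simp only [heq] at hG
  rw [hG]
  rw [nf, ng] at hH
  calc _ ≤ K * (C * |lam| ^ (-(1 / 6) : ℝ) * (Ka * nn f) * (Kb * nn g) * nn h) := by gcongr
    _ = _ := by ring

lemma exists_coords (π₁ π₂ π₃ : (ℝ × ℝ) →ₗ[ℝ] ℝ)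
    (h₁₂ : LinearIndependent ℝ ![π₁, π₂])
    (h₂₃ : LinearIndependent ℝ ![π₂, π₃])
    (h₁₃ : LinearIndependent ℝ ![π₁, π₃]) :
    ∃ (Ψ : (ℝ × ℝ) ≃L[ℝ] (ℝ × ℝ)) (α β : ℝ), α ≠ 0 ∧ β ≠ 0 ∧ (∀ p, π₁ p = α * (Ψ p).1) ∧
      (∀ p, π₂ p = β * (Ψ p).2) ∧ (∀ p, π₃ p = (Ψ p).1 + (Ψ p).2) := by
  have hexp : ∀ π : (ℝ × ℝ) →ₗ[ℝ] ℝ, ∀ p, π p = p.1 * π (1, 0) + p.2 * π (0, 1) := by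
    intro π p
    have : p = p.1 • ((1, 0) : ℝ × ℝ) + p.2 • ((0, 1) : ℝ × ℝ) := by ext <;> simp
    conv_lhs => rw [this]
    rw [map_add, map_smul, map_smul, smul_eq_mul, smul_eq_mul]
  have E1 := hexp π₁
  have E2 := hexp π₂
  have E3 := hexp π₃
  rw [LinearIndependent.pair_iff] at h₁₂ h₂₃ h₁₃
  have hlin : ∀ s t : ℝ, ∀ π π' : (ℝ × ℝ) →ₗ[ℝ] ℝ, s * π (1, 0) + t * π' (1, 0) = 0 →
      s * π (0, 1) + t * π' (0, 1) = 0 → s • π + t • π' = 0 := by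
    intro s t π π' u1 u2
    ext
    · simpa using u1
    · simpa using u2
  set a1 := π₁ (1, 0)
  set b1 := π₁ (0, 1)
  set a2 := π₂ (1, 0)
  set b2 := π₂ (0, 1)
  set a3 := π₃ (1, 0)
  set b3 := π₃ (0, 1)
  have hd : a1 * b2 - b1 * a2 ≠ 0 := by
    intro hd
    have q1 := h₁₂ b2 (-b1) (hlin _ _ _ _ (by change b2 * a1 + -b1 * a2 = 0; linarith)
      (by change b2 * b1 + -b1 * b2 = 0; ring))
    have q2 := h₁₂ a2 (-a1) (hlin _ _ _ _ (by change a2 * a1 + -a1 * a2 = 0; ring)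
      (by change a2 * b1 + -a1 * b2 = 0; linarith))
    have q3 := h₁₂ 1 0 (hlin _ _ _ _ (by change 1 * a1 + 0 * a2 = 0; linarith [q2.2])
      (by change 1 * b1 + 0 * b2 = 0; linarith [q1.2]))
    exact one_ne_zero q3.1
  set α := (a3 * b2 - b3 * a2) / (a1 * b2 - b1 * a2) with hα
  set β := (a1 * b3 - b1 * a3) / (a1 * b2 - b1 * a2) with hβ
  have r1 : a3 = α * a1 + β * a2 := by rw [hα, hβ, div_mul_eq_mul_div, div_mul_eq_mul_div, ← add_div, eq_div_iff hd]; ring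
  have r2 : b3 = α * b1 + β * b2 := by rw [hα, hβ, div_mul_eq_mul_div, div_mul_eq_mul_div, ← add_div, eq_div_iff hd]; ring
  have hα0 : α ≠ 0 := by
    intro h0
    have := h₂₃ β (-1) (hlin _ _ _ _ (by change β * a2 + -1 * a3 = 0; rw [r1, h0]; ring)
      (by change β * b2 + -1 * b3 = 0; rw [r2, h0]; ring))
    linarith [this.2]
  have hβ0 : β ≠ 0 := by
    intro h0
    have := h₁₃ α (-1) (hlin _ _ _ _ (by change α * a1 + -1 * a3 = 0; rw [r1, h0]; ring)
      (by change α * b1 + -1 * b3 = 0; rw [r2, h0]; ring))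
    linarith [this.2]
  let Φ : (ℝ × ℝ) →ₗ[ℝ] (ℝ × ℝ) := (α • π₁).prod (β • π₂)
  have hΦ : ∀ p, Φ p = (α * π₁ p, β * π₂ p) := fun p => rfl
  have hinj : Function.Injective Φ := by
    rw [← LinearMap.ker_eq_bot, LinearMap.ker_eq_bot']
    intro p hp
    rw [hΦ, Prod.mk_eq_zero] at hp
    have u1 : π₁ p = 0 := by simpa [hα0] using hp.1
    have u2 : π₂ p = 0 := by simpa [hβ0] using hp.2
    rw [E1] at u1
    rw [E2] at u2
    ext
    · have : p.1 * (a1 * b2 - b1 * a2) = 0 := by linear_combination b2 * u1 - b1 * u2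
      simpa [hd] using this
    · have : p.2 * (a1 * b2 - b1 * a2) = 0 := by linear_combination a1 * u2 - a2 * u1
      simpa [hd] using this
  let Ψ := (LinearEquiv.ofInjectiveEndo Φ hinj).toContinuousLinearEquiv
  have hΨ : ∀ p, Ψ p = (α * π₁ p, β * π₂ p) := fun p => rfl
  refine ⟨Ψ, α⁻¹, β⁻¹, inv_ne_zero hα0, inv_ne_zero hβ0, ?_, ?_, ?_⟩
  · intro p; rw [hΨ]; field_simp
  · intro p; rw [hΨ]; field_simp
  · intro p
    rw [hΨ]
    change π₃ p = α * π₁ p + β * π₂ p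
    rw [E1, E2, E3, r1, r2]; ring

end Tri



/-- Trilinear oscillatory integral estimate under a simple
nondegeneracy condition (Theorem `global70` of the paper). -/
theorem trilinear_nondegenerate_decay
    (π₁ π₂ π₃ : (ℝ × ℝ) →ₗ[ℝ] ℝ)
    (hsurj₁ : Function.Surjective π₁) (hsurj₂ : Function.Surjective π₂)
    (hsurj₃ : Function.Surjective π₃)
    (hindep₁₂ : LinearIndependent ℝ ![π₁, π₂])
    (hindep₂₃ : LinearIndependent ℝ ![π₂, π₃])
    (hindep₁₃ : LinearIndependent ℝ ![π₁, π₃])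
    (v₁ v₂ v₃ : ℝ × ℝ)
    (hker₁ : π₁ v₁ = 0) (hker₂ : π₂ v₂ = 0) (hker₃ : π₃ v₃ = 0)
    (hunit₁ : v₁.1 ^ 2 + v₁.2 ^ 2 = 1) (hunit₂ : v₂.1 ^ 2 + v₂.2 ^ 2 = 1)
    (hunit₃ : v₃.1 ^ 2 + v₃.2 ^ 2 = 1)
    (a : ℝ × ℝ → ℝ) (ha : ContDiff ℝ (⊤ : ℕ∞) a) (hacs : HasCompactSupport a)
    (S : ℝ × ℝ → ℝ) (hS : ContDiff ℝ (⊤ : ℕ∞) S)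
    (hD : ∀ p ∈ convexHull ℝ (tsupport a),
      1 ≤ |fderiv ℝ (fun q : ℝ × ℝ =>
              fderiv ℝ (fun r : ℝ × ℝ => fderiv ℝ S r v₃) q v₂) p v₁|) :
    ∃ C : ℝ, ∀ lam : ℝ, 1 ≤ |lam| →
      ∀ f₁ f₂ f₃ : Lp ℂ 2 (volume : Measure ℝ),
        ‖∫ p : ℝ × ℝ, Complex.exp (Complex.I * lam * S p) * (a p : ℂ) *
            f₁ (π₁ p) * f₂ (π₂ p) * f₃ (π₃ p)‖ ≤
          C * |lam| ^ (-(1 / 6) : ℝ) * ‖f₁‖ * ‖f₂‖ * ‖f₃‖ := by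
  
  obtain ⟨Ψ, α, β, hα, hβ, e1, e2, e3⟩ := Tri.exists_coords π₁ π₂ π₃ hindep₁₂ hindep₂₃ hindep₁₃
  have nz : ∀ v : ℝ × ℝ, v.1 ^ 2 + v.2 ^ 2 = 1 → v ≠ 0 := by
    rintro v hv rfl
    simp at hv
  obtain ⟨C, H⟩ := Tri.abstr Ψ hα hβ (nz v₁ hunit₁) (nz v₂ hunit₂) (nz v₃ hunit₃)
    (by have := hker₁; rw [e1] at this; simpa [hα] using this)
    (by have := hker₂; rw [e2] at this; simpa [hβ] using this)
    (by rw [← e3]; exact hker₃) ha hacs hS hD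
  refine ⟨C, fun lam hl f₁ f₂ f₃ => ?_⟩
  have := H lam hl f₁ f₂ f₃ ⟨Lp.stronglyMeasurable f₁, Lp.memLp f₁⟩
    ⟨Lp.stronglyMeasurable f₂, Lp.memLp f₂⟩ ⟨Lp.stronglyMeasurable f₃, Lp.memLp f₃⟩
  simp only [← e1, ← e2, ← e3] at this
  rw [Lp.norm_def, Lp.norm_def, Lp.norm_def]
  exact this
end
end

section
/- There is an absolute constant C with the following property. Let δ₁, δ₂ ∈ (0,1], μ > 0, and λ ∈ ℝ with λ ≠ 0. Let a : ℝ² → ℂ be a smooth function supported in I × J, where I and J are intervals with |I| ≤ δ₁ and |J| ≤ δ₂, satisfying ‖a‖_∞ ≤ 1, |∂_y a(x,y)| ≤ δ₂^{−1} and |∂_y² a(x,y)| ≤ δ₂^{−2} for all (x,y). Let S : ℝ² → ℝ be smooth and suppose that for all (x,y) in the convex hull of the support of a: μ ≤ |DS(x,y)|, and |∂_y^β DS(x,y)| ≤ μ δ₂^{−β} for β = 1, 2. Then for all f₁, f₂, f₃ ∈ L²(ℝ): |Λ_S(f₁,f₂,f₃)| ≤ C |λμ|^{−1/6} ‖f₁‖_{L²}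 ‖f₂‖_{L²} ‖f₃‖_{L²}. -/
open MeasureTheory

noncomputable section

/-- Partial derivative in the first variable. -/
def pdx (f : ℝ × ℝ → ℝ) : ℝ × ℝ → ℝ := fun p => deriv (fun t => f (t, p.2)) p.1

/-- Partial derivative in the second variable. -/
def pdy (f : ℝ × ℝ → ℝ) : ℝ × ℝ → ℝ := fun p => deriv (fun t => f (p.1, t)) p.2

/-- Partial derivative in the second variable, for complex-valued functions. -/
def pdyC (f : ℝ × ℝ → ℂ) : ℝ × ℝ → ℂ := fun p => deriv (fun t => f (p.1, t)) p.2

/-- The differential operator `DS = ∂ₓ∂_y(∂ₓ − ∂_y)S = S_xxy − S_xyy`. -/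
def DOp (S : ℝ × ℝ → ℝ) : ℝ × ℝ → ℝ := pdx (pdy (fun p => pdx S p - pdy S p))


section oscillatory

/-- one integration by parts -/
lemma ibp_aux (φ ψ ψ1 : ℝ → ℝ) (b b1 : ℝ → ℂ) (T : Set ℝ) (hT : IsClosed T)
    (hTfin : volume T < ⊤) (N M A A1 : ℝ) (hN : 0 < N)
    (hφ : ∀ y, HasDerivAt φ (ψ y) y) (hψ : ∀ y, HasDerivAt ψ (ψ1 y) y)
    (hψ1m : Measurable ψ1) (hb1m : Measurable b1)
    (hb : ∀ y, HasDerivAt b (b1 y) y)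
    (hoff : ∀ y, y ∉ T → b y = 0)
    (hlow : ∀ y ∈ T, N ≤ |ψ y|) (hup : ∀ y ∈ T, |ψ1 y| ≤ M)
    (hA : ∀ y ∈ T, ‖b y‖ ≤ A) (hA1 : ∀ y ∈ T, ‖b1 y‖ ≤ A1) :
    (∀ y, y ∉ T → b1 y = 0) ∧
    ∫ y, Complex.exp (Complex.I * φ y) * b y =
      Complex.I * ∫ y, Complex.exp (Complex.I * φ y) *
        (b1 y / ψ y - b y * ψ1 y / (ψ y) ^ 2) := by
  have hoff1 : ∀ y, y ∉ T → b1 y = 0 := by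
    intro y hy
    have h1 : b =ᶠ[nhds y] fun _ => 0 := by
      filter_upwards [hT.isOpen_compl.mem_nhds hy] with z hz using hoff z hz
    exact (hb y).unique ((hasDerivAt_const y (0:ℂ)).congr_of_eventuallyEq h1)
  refine ⟨hoff1, ?_⟩
  have hcφ : Continuous φ := continuous_iff_continuousAt.2 fun y => (hφ y).continuousAt
  have hcψ : Continuous ψ := continuous_iff_continuousAt.2 fun y => (hψ y).continuousAt
  have hcb : Continuous b := continuous_iff_continuousAt.2 fun y => (hb y).continuousAt
  have hmφ := hcφ.measurable
  have hmψ := hcψ.measurable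
  have hmb := hcb.measurable
  have hbdd : ∀ (w : ℝ → ℂ) (B : ℝ), Measurable w → (∀ y, y ∉ T → w y = 0) →
      (∀ y ∈ T, ‖w y‖ ≤ B) → Integrable w := by
    intro w B hw h0 hB
    have : Integrable (T.indicator w) := by
      rw [integrable_indicator_iff hT.measurableSet]
      exact Measure.integrableOn_of_bounded hTfin.ne hw.aestronglyMeasurable
        ((ae_restrict_iff' hT.measurableSet).2 (Filter.Eventually.of_forall hB))
    rwa [Set.indicator_eq_self.2] at this
    intro y hy
    by_contra h
    exact hy (h0 y h)
  have hexp : ∀ y : ℝ, ‖Complex.exp (Complex.I * φ y)‖ = 1 := by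
    intro y; rw [mul_comm]; exact Complex.norm_exp_ofReal_mul_I _
  -- derivative of b / ψ
  have hu : ∀ y, HasDerivAt (fun y => b y / ψ y) (b1 y / ψ y - b y * ψ1 y / (ψ y) ^ 2) y := by
    intro y
    by_cases hy : y ∈ T
    · have h0 : ψ y ≠ 0 := by
        intro h; have := hlow y hy; rw [h, abs_zero] at this; linarith
      have h0' : (ψ y : ℂ) ≠ 0 := by exact_mod_cast h0
      have := (hb y).div (hψ y).ofReal_comp h0'
      refine this.congr_deriv ?_
      field_simp
    · rw [hoff y hy, hoff1 y hy]
      have h1 : (fun y => b y / ψ y) =ᶠ[nhds y] fun _ => 0 := by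
        filter_upwards [hT.isOpen_compl.mem_nhds hy] with z hz
        rw [hoff z hz]; simp
      have := (hasDerivAt_const y (0:ℂ)).congr_of_eventuallyEq h1
      simpa using this
  have hv : ∀ y, HasDerivAt (fun y : ℝ => Complex.exp (Complex.I * φ y))
      (Complex.exp (Complex.I * φ y) * (Complex.I * ψ y)) y := by
    intro y
    exact ((hφ y).ofReal_comp.const_mul Complex.I).cexp
  have hub : ∀ y ∈ T, ‖b y / ψ y‖ ≤ A / N := by
    intro y hy
    rw [norm_div, Complex.norm_real, Real.norm_eq_abs]
    have := hlow y hy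
    have := hA y hy
    gcongr
    exact (norm_nonneg _).trans this
  have hu1b : ∀ y ∈ T, ‖b1 y / ψ y - b y * ψ1 y / (ψ y) ^ 2‖ ≤ A1 / N + A * M / N ^ 2 := by
    intro y hy
    refine (norm_sub_le _ _).trans ?_
    rw [norm_div, norm_div, norm_mul, norm_pow, Complex.norm_real, Real.norm_eq_abs,
      Complex.norm_real, Real.norm_eq_abs]
    have := hlow y hy
    have h2 := hA y hy
    have h3 := hA1 y hy
    have h4 := hup y hy
    have := (norm_nonneg _).trans h2
    have := (norm_nonneg _).trans h3
    have := (abs_nonneg _).trans h4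
    gcongr
  have i1 : Integrable ((fun y => b y / ψ y) *
      fun y => Complex.exp (Complex.I * φ y) * (Complex.I * ψ y)) := by
    refine hbdd _ A (by fun_prop) (fun y hy => by simp [hoff y hy]) fun y hy => ?_
    have h0 : |ψ y| ≠ 0 := by
      intro h; have := hlow y hy; rw [h] at this; linarith
    simp only [Pi.mul_apply, norm_mul, norm_div, hexp, Complex.norm_real, Complex.norm_I,
      Real.norm_eq_abs, one_mul]
    rw [div_mul_cancel₀ _ h0]
    exact hA y hy
  have i2 : Integrable ((fun y => b1 y / ψ y - b y * ψ1 y / (ψ y) ^ 2) *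
      fun y : ℝ => Complex.exp (Complex.I * φ y)) := by
    refine hbdd _ (A1 / N + A * M / N ^ 2) (by fun_prop)
      (fun y hy => by simp [hoff y hy, hoff1 y hy]) fun y hy => ?_
    simp only [Pi.mul_apply, norm_mul, hexp, mul_one]
    exact hu1b y hy
  have i3 : Integrable ((fun y => b y / ψ y) * fun y : ℝ => Complex.exp (Complex.I * φ y)) := by
    refine hbdd _ (A / N) (by fun_prop)
      (fun y hy => by simp [hoff y hy]) fun y hy => ?_
    simp only [Pi.mul_apply, norm_mul, hexp, mul_one]
    exact hub y hy
  have key := integral_mul_deriv_eq_deriv_mul_of_integrable (fun y _ => hu y) (fun y _ => hv y) i1 i2 i3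
  have e1 : ∀ y, b y / ψ y * (Complex.exp (Complex.I * φ y) * (Complex.I * ψ y)) =
      Complex.I * (Complex.exp (Complex.I * φ y) * b y) := by
    intro y
    by_cases hy : y ∈ T
    · have h0 : ψ y ≠ 0 := by
        intro h; have := hlow y hy; rw [h, abs_zero] at this; linarith
      have h0' : (ψ y : ℂ) ≠ 0 := by exact_mod_cast h0
      field_simp
    · simp [hoff y hy]
  simp only [e1] at key
  rw [integral_const_mul] at key
  have e2 : ∀ y, (b1 y / ψ y - b y * ψ1 y / (ψ y) ^ 2) * Complex.exp (Complex.I * φ y)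
      = Complex.exp (Complex.I * φ y) * (b1 y / ψ y - b y * ψ1 y / (ψ y) ^ 2) :=
    fun y => mul_comm _ _
  simp only [e2] at key
  have := congrArg (fun z => -Complex.I * z) key
  simp only [← mul_assoc, neg_mul, Complex.I_mul_I, mul_neg, neg_neg] at this
  simpa using this

lemma osc_bound (φ ψ ψ1 ψ2 : ℝ → ℝ) (b b1 b2 : ℝ → ℂ) (T : Set ℝ) (hT : IsClosed T)
    (N δ : ℝ) (hδ : 0 < δ) (hN : 0 < N) (hTv : volume T ≤ ENNReal.ofReal δ)
    (hφ : ∀ y, HasDerivAt φ (ψ y) y) (hψ : ∀ y, HasDerivAt ψ (ψ1 y) y)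
    (hψ1 : ∀ y, HasDerivAt ψ1 (ψ2 y) y)
    (hψ2m : Measurable ψ2) (hb2m : Measurable b2)
    (hb : ∀ y, HasDerivAt b (b1 y) y) (hb1 : ∀ y, HasDerivAt b1 (b2 y) y)
    (hoff : ∀ y, y ∉ T → b y = 0)
    (hlow : ∀ y ∈ T, N ≤ |ψ y|) (hup : ∀ y ∈ T, |ψ1 y| ≤ N / δ)
    (hup2 : ∀ y ∈ T, |ψ2 y| ≤ N / δ ^ 2)
    (hA : ∀ y ∈ T, ‖b y‖ ≤ 1) (hA1 : ∀ y ∈ T, ‖b1 y‖ ≤ 4 / δ)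
    (hA2 : ∀ y ∈ T, ‖b2 y‖ ≤ 16 / δ ^ 2) :
    ‖∫ y, Complex.exp (Complex.I * φ y) * b y‖ ≤ 32 * δ / (δ * N) ^ 2 := by
  have hTfin : volume T < ⊤ := hTv.trans_lt ENNReal.ofReal_lt_top
  have hcφ : Continuous φ := continuous_iff_continuousAt.2 fun y => (hφ y).continuousAt
  have hcψ : Continuous ψ := continuous_iff_continuousAt.2 fun y => (hψ y).continuousAt
  have hcψ1 : Continuous ψ1 := continuous_iff_continuousAt.2 fun y => (hψ1 y).continuousAt
  have hcb : Continuous b := continuous_iff_continuousAt.2 fun y => (hb y).continuousAt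
  have hcb1 : Continuous b1 := continuous_iff_continuousAt.2 fun y => (hb1 y).continuousAt
  have hmψ := hcψ.measurable
  have hmψ1 := hcψ1.measurable
  have hmb := hcb.measurable
  have hmb1 := hcb1.measurable
  obtain ⟨hoff1, e1⟩ := ibp_aux φ ψ ψ1 b b1 T hT hTfin N (N/δ) 1 (4/δ) hN hφ hψ hmψ1 hmb1 hb hoff
    hlow hup hA hA1
  have hoff2 : ∀ y, y ∉ T → b2 y = 0 := by
    intro y hy
    have h1 : b1 =ᶠ[nhds y] fun _ => 0 := by
      filter_upwards [hT.isOpen_compl.mem_nhds hy] with z hz using hoff1 z hz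
    exact (hb1 y).unique ((hasDerivAt_const y (0:ℂ)).congr_of_eventuallyEq h1)
  set c : ℝ → ℂ := fun y => b1 y / ψ y - b y * ψ1 y / (ψ y) ^ 2 with hc
  set c1 : ℝ → ℂ := fun y => b2 y / ψ y - 2 * b1 y * ψ1 y / (ψ y) ^ 2 - b y * ψ2 y / (ψ y) ^ 2
    + 2 * b y * (ψ1 y) ^ 2 / (ψ y) ^ 3 with hc1
  have hcoff : ∀ y, y ∉ T → c y = 0 := fun y hy => by simp [hc, hoff y hy, hoff1 y hy]
  have hcd : ∀ y, HasDerivAt c (c1 y) y := by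
    intro y
    by_cases hy : y ∈ T
    · have h0 : ψ y ≠ 0 := by
        intro h; have := hlow y hy; rw [h, abs_zero] at this; linarith
      have h0' : (ψ y : ℂ) ≠ 0 := by exact_mod_cast h0
      have := ((hb1 y).div (hψ y).ofReal_comp h0').sub
        (((hb y).mul (hψ1 y).ofReal_comp).div ((hψ y).ofReal_comp.pow 2) (pow_ne_zero 2 h0'))
      refine this.congr_deriv ?_
      simp only [hc1, Pi.mul_apply, Pi.pow_apply]
      field_simp
      push_cast
      ring
    · have h1 : c =ᶠ[nhds y] fun _ => 0 := by
        filter_upwards [hT.isOpen_compl.mem_nhds hy] with z hz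
        exact hcoff z hz
      have := (hasDerivAt_const y (0:ℂ)).congr_of_eventuallyEq h1
      simpa [hc1, hoff y hy, hoff1 y hy, hoff2 y hy] using this
  have nr : ∀ r : ℝ, ‖(r:ℂ)‖ = |r| := fun r => by rw [Complex.norm_real, Real.norm_eq_abs]
  have hcA : ∀ y ∈ T, ‖c y‖ ≤ 5 / (δ * N) := by
    intro y hy
    have g1 := hlow y hy
    have g2 := hup y hy
    have g3 := hA y hy
    have g4 := hA1 y hy
    calc ‖c y‖ ≤ ‖b1 y‖ / |ψ y| + ‖b y‖ * |ψ1 y| / |ψ y| ^ 2 := by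
          refine (norm_sub_le _ _).trans ?_
          simp only [norm_div, norm_mul, norm_pow, nr]; exact le_rfl
      _ ≤ (4 / δ) / N + 1 * (N / δ) / N ^ 2 := by gcongr
      _ = 5 / (δ * N) := by field_simp; norm_num
  have hcA1 : ∀ y ∈ T, ‖c1 y‖ ≤ 27 / (δ ^ 2 * N) := by
    intro y hy
    have g1 := hlow y hy
    have g2 := hup y hy
    have g3 := hA y hy
    have g4 := hA1 y hy
    have g5 := hA2 y hy
    have g6 := hup2 y hy
    calc ‖c1 y‖ ≤ ‖b2 y‖ / |ψ y| + 2 * ‖b1 y‖ * |ψ1 y| / |ψ y| ^ 2 + ‖b y‖ * |ψ2 y| / |ψ y| ^ 2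
            + 2 * ‖b y‖ * |ψ1 y| ^ 2 / |ψ y| ^ 3 := by
          refine (norm_add_le _ _).trans ?_
          refine (add_le_add_left ((norm_sub_le _ _).trans
            (add_le_add_left (norm_sub_le _ _) _)) _).trans ?_
          simp only [norm_div, norm_mul, norm_pow, nr, Complex.norm_ofNat]; exact le_rfl
      _ ≤ (16 / δ ^ 2) / N + 2 * (4 / δ) * (N / δ) / N ^ 2 + 1 * (N / δ ^ 2) / N ^ 2
            + 2 * 1 * (N / δ) ^ 2 / N ^ 3 := by gcongr
      _ = 27 / (δ ^ 2 * N) := by field_simp; norm_num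
  obtain ⟨hcoff1, e2⟩ := ibp_aux φ ψ ψ1 c c1 T hT hTfin N (N/δ) _ _ hN hφ hψ hmψ1
    (by fun_prop) hcd hcoff hlow hup hcA hcA1
  rw [e1, e2, norm_mul, norm_mul, Complex.norm_I, one_mul, one_mul]
  have hexp : ∀ y : ℝ, ‖Complex.exp (Complex.I * φ y)‖ = 1 := by
    intro y; rw [mul_comm]; exact Complex.norm_exp_ofReal_mul_I _
  rw [← setIntegral_eq_integral_of_forall_compl_eq_zero (s := T)
    (fun y hy => by simp [hcoff y hy, hcoff1 y hy])]
  refine (norm_setIntegral_le_of_norm_le_const (C := 32 / (δ * N) ^ 2) hTfin ?_).trans ?_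
  · intro y hy
    have g1 := hlow y hy
    have g2 := hup y hy
    have g3 := hcA y hy
    have g4 := hcA1 y hy
    rw [norm_mul, hexp, one_mul]
    calc ‖c1 y / ψ y - c y * ψ1 y / (ψ y) ^ 2‖
        ≤ ‖c1 y‖ / |ψ y| + ‖c y‖ * |ψ1 y| / |ψ y| ^ 2 := by
          refine (norm_sub_le _ _).trans ?_
          simp only [norm_div, norm_mul, norm_pow, nr]; exact le_rfl
      _ ≤ (27 / (δ ^ 2 * N)) / N + 5 / (δ * N) * (N / δ) / N ^ 2 := by gcongr
      _ = 32 / (δ * N) ^ 2 := by field_simp; norm_num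
  · have : volume.real T ≤ δ := ENNReal.toReal_le_of_le_ofReal hδ.le hTv
    calc 32 / (δ * N) ^ 2 * volume.real T ≤ 32 / (δ * N) ^ 2 * δ := by gcongr
      _ = _ := by ring

end oscillatory

section partials

lemma pdx_eq {f : ℝ × ℝ → ℝ} (hf : ContDiff ℝ (⊤ : ℕ∞) f) :
    pdx f = fun p => fderiv ℝ f p (1, 0) := by
  funext p
  have h1 : HasFDerivAt f (fderiv ℝ f p) (p.1, p.2) :=
    ((hf.differentiable (by simp)) p).hasFDerivAt
  exact (h1.comp_hasDerivAt p.1 ((hasDerivAt_id p.1).prodMk (hasDerivAt_const p.1 p.2))).deriv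

lemma pdy_eq {f : ℝ × ℝ → ℝ} (hf : ContDiff ℝ (⊤ : ℕ∞) f) :
    pdy f = fun p => fderiv ℝ f p (0, 1) := by
  funext p
  have h1 : HasFDerivAt f (fderiv ℝ f p) (p.1, p.2) :=
    ((hf.differentiable (by simp)) p).hasFDerivAt
  exact (h1.comp_hasDerivAt p.2 ((hasDerivAt_const p.2 p.1).prodMk (hasDerivAt_id p.2))).deriv

lemma pdyC_eq {f : ℝ × ℝ → ℂ} (hf : ContDiff ℝ (⊤ : ℕ∞) f) :
    pdyC f = fun p => fderiv ℝ f p (0, 1) := by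
  funext p
  have h1 : HasFDerivAt f (fderiv ℝ f p) (p.1, p.2) :=
    ((hf.differentiable (by simp)) p).hasFDerivAt
  exact (h1.comp_hasDerivAt p.2 ((hasDerivAt_const p.2 p.1).prodMk (hasDerivAt_id p.2))).deriv

lemma pdx_smooth {f : ℝ × ℝ → ℝ} (hf : ContDiff ℝ (⊤ : ℕ∞) f) : ContDiff ℝ (⊤ : ℕ∞) (pdx f) := by
  rw [pdx_eq hf]
  exact (hf.fderiv_right (m := (⊤ : ℕ∞)) (by simp)).clm_apply contDiff_const

lemma pdy_smooth {f : ℝ × ℝ → ℝ} (hf : ContDiff ℝ (⊤ : ℕ∞) f) : ContDiff ℝ (⊤ : ℕ∞) (pdy f) := by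
  rw [pdy_eq hf]
  exact (hf.fderiv_right (m := (⊤ : ℕ∞)) (by simp)).clm_apply contDiff_const

lemma pdyC_smooth {f : ℝ × ℝ → ℂ} (hf : ContDiff ℝ (⊤ : ℕ∞) f) : ContDiff ℝ (⊤ : ℕ∞) (pdyC f) := by
  rw [pdyC_eq hf]
  exact (hf.fderiv_right (m := (⊤ : ℕ∞)) (by simp)).clm_apply contDiff_const

lemma line_deriv {f : ℝ × ℝ → ℝ} (hf : ContDiff ℝ (⊤ : ℕ∞) f) (c d e g s : ℝ) :
    HasDerivAt (fun s => f (c + s * d, e + s * g))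
      (d * pdx f (c + s * d, e + s * g) + g * pdy f (c + s * d, e + s * g)) s := by
  have h1 : HasFDerivAt f (fderiv ℝ f (c + s * d, e + s * g)) (c + s * d, e + s * g) :=
    ((hf.differentiable (by simp)) _).hasFDerivAt
  have h2 : HasDerivAt (fun s : ℝ => (c + s * d, e + s * g)) (d, g) s := by
    have := (((hasDerivAt_id s).mul_const d).const_add c).prodMk
      (((hasDerivAt_id s).mul_const g).const_add e)
    simpa using this
  refine (h1.comp_hasDerivAt s h2).congr_deriv ?_
  rw [pdx_eq hf, pdy_eq hf]
  have : ((d, g) : ℝ × ℝ) = d • ((1, 0) : ℝ × ℝ) + g • ((0, 1) : ℝ × ℝ) := by simp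
  rw [this, map_add, map_smul, map_smul]
  simp

lemma pd_comm {f : ℝ × ℝ → ℝ} (hf : ContDiff ℝ (⊤ : ℕ∞) f) : pdx (pdy f) = pdy (pdx f) := by
  have hd := hf.fderiv_right (m := (⊤ : ℕ∞)) (by simp)
  rw [pdx_eq (pdy_smooth hf), pdy_eq (pdx_smooth hf), pdx_eq hf, pdy_eq hf]
  funext p
  have h2 : HasFDerivAt (fderiv ℝ f) (fderiv ℝ (fderiv ℝ f) p) p :=
    ((hd.differentiable (by simp)) p).hasFDerivAt
  have e1 := (h2.clm_apply (hasFDerivAt_const ((0:ℝ),(1:ℝ)) p)).fderiv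
  have e2 := (h2.clm_apply (hasFDerivAt_const ((1:ℝ),(0:ℝ)) p)).fderiv
  rw [e1, e2]
  simp
  exact second_derivative_symmetric
    (fun q => ((hf.differentiable (by simp)) q).hasFDerivAt) h2 _ _

lemma pdx_sub {f g : ℝ × ℝ → ℝ} (hf : ContDiff ℝ (⊤ : ℕ∞) f) (hg : ContDiff ℝ (⊤ : ℕ∞) g) :
    pdx (fun p => f p - g p) = fun p => pdx f p - pdx g p := by
  rw [pdx_eq hf, pdx_eq hg, pdx_eq (hf.sub hg)]
  funext p
  rw [fderiv_fun_sub ((hf.differentiable (by simp)) p) ((hg.differentiable (by simp)) p)]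
  simp

lemma pdy_sub {f g : ℝ × ℝ → ℝ} (hf : ContDiff ℝ (⊤ : ℕ∞) f) (hg : ContDiff ℝ (⊤ : ℕ∞) g) :
    pdy (fun p => f p - g p) = fun p => pdy f p - pdy g p := by
  rw [pdy_eq hf, pdy_eq hg, pdy_eq (hf.sub hg)]
  funext p
  rw [fderiv_fun_sub ((hf.differentiable (by simp)) p) ((hg.differentiable (by simp)) p)]
  simp

/-- `∂ₓ(∂ₓ - ∂_y)` -/
def DQ (Q : ℝ × ℝ → ℝ) : ℝ × ℝ → ℝ := fun p => pdx (pdx Q) p - pdy (pdx Q) p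

lemma DQ_pdy {f : ℝ × ℝ → ℝ} (hf : ContDiff ℝ (⊤ : ℕ∞) f) : pdy (DQ f) = DQ (pdy f) := by
  unfold DQ
  rw [pdy_sub (pdx_smooth (pdx_smooth hf)) (pdy_smooth (pdx_smooth hf)),
    ← pd_comm (pdx_smooth hf), ← pd_comm hf]

lemma DOp_eq {f : ℝ × ℝ → ℝ} (hf : ContDiff ℝ (⊤ : ℕ∞) f) : DOp f = DQ (pdy f) := by
  unfold DOp DQ
  rw [pdy_sub (pdx_smooth hf) (pdy_smooth hf),
    pdx_sub (pdy_smooth (pdx_smooth hf)) (pdy_smooth (pdy_smooth hf)), ← pd_comm hf,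
    pd_comm (pdy_smooth hf)]

lemma diff2 {Q : ℝ × ℝ → ℝ} (hQ : ContDiff ℝ (⊤ : ℕ∞) Q) (x x' y τ : ℝ) :
    ∃ s ∈ Set.Icc (0:ℝ) 1, ∃ r ∈ Set.Icc (0:ℝ) 1,
      Q (x, y) - Q (x - τ, y + τ) - Q (x', y) + Q (x' - τ, y + τ) =
        (x - x') * τ * DQ Q (x' + s * (x - x') + r * (-τ), y + r * τ) := by
  have hw : ∀ s : ℝ, HasDerivAt (fun s => Q (x' + s * (x - x'), y + s * 0) -
      Q ((x' - τ) + s * (x - x'), (y + τ) + s * 0))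
      (((x - x') * pdx Q (x' + s * (x - x'), y + s * 0) +
          0 * pdy Q (x' + s * (x - x'), y + s * 0)) -
        ((x - x') * pdx Q ((x' - τ) + s * (x - x'), (y + τ) + s * 0) +
          0 * pdy Q ((x' - τ) + s * (x - x'), (y + τ) + s * 0))) s := fun s =>
    (line_deriv hQ x' (x - x') y 0 s).sub (line_deriv hQ (x' - τ) (x - x') (y + τ) 0 s)
  obtain ⟨s, hs, es⟩ := exists_hasDerivAt_eq_slope _ _ (zero_lt_one (α := ℝ))
    (HasDerivAt.continuousOn fun s _ => hw s) (fun s _ => hw s)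
  have hv : ∀ r : ℝ, HasDerivAt (fun r => pdx Q ((x' + s * (x - x')) + r * (-τ), y + r * τ)) _ r :=
    fun r => line_deriv (pdx_smooth hQ) (x' + s * (x - x')) (-τ) y τ r
  obtain ⟨r, hr, er⟩ := exists_hasDerivAt_eq_slope _ _ (zero_lt_one (α := ℝ))
    (HasDerivAt.continuousOn fun r _ => hv r) (fun r _ => hv r)
  refine ⟨s, ⟨hs.1.le, hs.2.le⟩, r, ⟨hr.1.le, hr.2.le⟩, ?_⟩
  simp only [mul_zero, add_zero, zero_mul, one_mul, sub_zero, div_one] at es er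
  have t1 : x' + (x - x') = x := by ring
  have t2 : x' - τ + (x - x') = x - τ := by ring
  have t3 : x' + s * (x - x') + -τ = x' - τ + s * (x - x') := by ring
  rw [t1, t2] at es
  rw [t3] at er
  unfold DQ
  linear_combination - es + (x - x') * er

lemma hull_mem {s : Set (ℝ × ℝ)} {x x' y τ σ r : ℝ} (h1 : (x, y) ∈ s) (h2 : (x', y) ∈ s)
    (h3 : (x - τ, y + τ) ∈ s) (h4 : (x' - τ, y + τ) ∈ s)
    (hσ : σ ∈ Set.Icc (0:ℝ) 1) (hr : r ∈ Set.Icc (0:ℝ) 1) :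
    (x' + σ * (x - x') + r * (-τ), y + r * τ) ∈ convexHull ℝ s := by
  have hc := convex_convexHull ℝ s
  have i1 := subset_convexHull ℝ s h1
  have i2 := subset_convexHull ℝ s h2
  have i3 := subset_convexHull ℝ s h3
  have i4 := subset_convexHull ℝ s h4
  have j1 := hc i1 i2 hσ.1 (sub_nonneg.2 hσ.2) (by ring)
  have j2 := hc i3 i4 hσ.1 (sub_nonneg.2 hσ.2) (by ring)
  have j3 := hc j2 j1 hr.1 (sub_nonneg.2 hr.2) (by ring)
  convert j3 using 1
  ext
  · simp; ring
  · simp; ring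

end partials

section kernel

lemma prod_bd {u u1 u2 v v1 v2 : ℂ} {A B δ : ℝ} (hδ : 0 < δ) (hA : 0 ≤ A) (_hB : 0 ≤ B)
    (h0 : ‖u‖ ≤ 1) (h1 : ‖u1‖ ≤ A / δ) (h2 : ‖u2‖ ≤ A ^ 2 / δ ^ 2)
    (k0 : ‖v‖ ≤ 1) (k1 : ‖v1‖ ≤ B / δ) (k2 : ‖v2‖ ≤ B ^ 2 / δ ^ 2) :
    ‖u * v‖ ≤ 1 ∧ ‖u1 * v + u * v1‖ ≤ (A + B) / δ ∧
      ‖(u2 * v + u1 * v1) + (u1 * v1 + u * v2)‖ ≤ (A + B) ^ 2 / δ ^ 2 := by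
  refine ⟨?_, ?_, ?_⟩
  · rw [norm_mul]; exact mul_le_one₀ h0 (norm_nonneg _) k0
  · calc ‖u1 * v + u * v1‖ ≤ ‖u1‖ * ‖v‖ + ‖u‖ * ‖v1‖ := by
          refine (norm_add_le _ _).trans ?_
          rw [norm_mul, norm_mul]
      _ ≤ A / δ * 1 + 1 * (B / δ) := by gcongr
      _ = _ := by ring
  · calc ‖(u2 * v + u1 * v1) + (u1 * v1 + u * v2)‖
        ≤ (‖u2‖ * ‖v‖ + ‖u1‖ * ‖v1‖) + (‖u1‖ * ‖v1‖ + ‖u‖ * ‖v2‖) := by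
          refine (norm_add_le _ _).trans ?_
          refine (add_le_add (norm_add_le _ _) (norm_add_le _ _)).trans ?_
          simp only [norm_mul]; exact le_rfl
      _ ≤ (A ^ 2 / δ ^ 2 * 1 + A / δ * (B / δ)) + (A / δ * (B / δ) + 1 * (B ^ 2 / δ ^ 2)) := by
          gcongr
      _ = _ := by field_simp; try ring

lemma kernel_bound (δ μ lam : ℝ) (hδ : 0 < δ) (hμ : 0 < μ) (hlam : lam ≠ 0)
    (a : ℝ × ℝ → ℂ) (I J : Set ℝ) (hJ : volume J ≤ ENNReal.ofReal δ)
    (ha : ContDiff ℝ (⊤ : ℕ∞) a) (hsupp : tsupport a ⊆ I ×ˢ J)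
    (a0 : ∀ p : ℝ × ℝ, ‖a p‖ ≤ 1)
    (a1 : ∀ p : ℝ × ℝ, ‖pdyC a p‖ ≤ δ⁻¹)
    (a2 : ∀ p : ℝ × ℝ, ‖pdyC (pdyC a) p‖ ≤ δ⁻¹ ^ 2)
    (S : ℝ × ℝ → ℝ) (hS : ContDiff ℝ (⊤ : ℕ∞) S)
    (hD : ∀ p ∈ convexHull ℝ (tsupport a),
          μ ≤ |DOp S p| ∧ |pdy (DOp S) p| ≤ μ * δ⁻¹ ∧
            |pdy (pdy (DOp S)) p| ≤ μ * δ⁻¹ ^ 2)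
    (k : ℝ × ℝ → ℂ) (hk : ∀ p, k p = Complex.exp (Complex.I * lam * S p) * a p)
    (τ : ℝ) (hτ : τ ≠ 0) (x x' : ℝ) :
    ‖∫ y, (k (x, y) * star (k (x - τ, y + τ))) * star (k (x', y) * star (k (x' - τ, y + τ)))‖
      ≤ 33 * δ * (1 + (δ * (|lam| * μ * |τ|) * (x - x')) ^ 2)⁻¹ := by
  set T : Set ℝ := {y | (x, y) ∈ tsupport a ∧ (x', y) ∈ tsupport a ∧
    (x - τ, y + τ) ∈ tsupport a ∧ (x' - τ, y + τ) ∈ tsupport a} with hTdef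
  have hcl : IsClosed (tsupport a) := isClosed_tsupport a
  have hT : IsClosed T := by
    refine IsClosed.inter (hcl.preimage (by fun_prop)) ?_
    refine IsClosed.inter (hcl.preimage (by fun_prop)) ?_
    exact IsClosed.inter (hcl.preimage (by fun_prop)) (hcl.preimage (by fun_prop))
  have hTJ : T ⊆ J := fun y hy => (hsupp hy.1).2
  have hTv : volume T ≤ ENNReal.ofReal δ := (measure_mono hTJ).trans hJ
  have hTfin : volume T < ⊤ := hTv.trans_lt ENNReal.ofReal_lt_top
  have hoffa : ∀ p, p ∉ tsupport a → a p = 0 := fun p hp => image_eq_zero_of_notMem_tsupport hp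
  -- amplitude
  set b : ℝ → ℂ := fun y => (a (x, y) * star (a (x - τ, y + τ))) *
    (star (a (x', y)) * a (x' - τ, y + τ)) with hbdef
  have hb0 : ∀ y, ‖b y‖ ≤ 1 := by
    intro y
    simp only [hbdef, norm_mul, norm_star]
    exact mul_le_one₀ (mul_le_one₀ (a0 _) (norm_nonneg _) (a0 _)) (by positivity)
      (mul_le_one₀ (a0 _) (norm_nonneg _) (a0 _))
  have hoff : ∀ y, y ∉ T → b y = 0 := by
    intro y hy
    by_contra hne
    apply hy
    refine ⟨?_, ?_, ?_, ?_⟩ <;>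
    · by_contra h
      apply hne
      simp [hbdef, hoffa _ h]
  set φ : ℝ → ℝ := fun y => lam * (S (x, y) - S (x - τ, y + τ) - S (x', y) + S (x' - τ, y + τ))
    with hφdef
  have heq : ∀ y, (k (x, y) * star (k (x - τ, y + τ))) *
      star (k (x', y) * star (k (x' - τ, y + τ))) = Complex.exp (Complex.I * φ y) * b y := by
    intro y
    have hst : ∀ s : ℝ, star (Complex.exp (Complex.I * lam * s)) =
        Complex.exp (-(Complex.I * lam * s)) := by
      intro s
      rw [Complex.star_def, ← Complex.exp_conj]
      simp
    have hst' : ∀ s : ℝ, star (Complex.exp (-(Complex.I * lam * s))) =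
        Complex.exp (Complex.I * lam * s) := by
      intro s
      rw [← hst, star_star]
    simp only [hk, star_mul', star_star, hst, hst', hbdef, hφdef]
    have : Complex.exp (Complex.I * ((lam * (S (x, y) - S (x - τ, y + τ) - S (x', y)
        + S (x' - τ, y + τ)) : ℝ) : ℂ)) = Complex.exp (Complex.I * lam * S (x, y)) *
        Complex.exp (-(Complex.I * lam * S (x - τ, y + τ))) *
        (Complex.exp (-(Complex.I * lam * S (x', y))) *
        Complex.exp (Complex.I * lam * S (x' - τ, y + τ))) := by
      rw [← Complex.exp_add, ← Complex.exp_add, ← Complex.exp_add]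
      congr 1
      push_cast
      ring
    rw [this]
    ring
  simp only [heq]
  have hexp : ∀ y : ℝ, ‖Complex.exp (Complex.I * φ y)‖ = 1 := by
    intro y; rw [mul_comm]; exact Complex.norm_exp_ofReal_mul_I _
  have triv : ‖∫ y, Complex.exp (Complex.I * φ y) * b y‖ ≤ δ := by
    rw [← setIntegral_eq_integral_of_forall_compl_eq_zero (s := T)
      (fun y hy => by simp [hoff y hy])]
    refine (norm_setIntegral_le_of_norm_le_const (C := 1) hTfin ?_).trans ?_
    · intro y hy
      rw [norm_mul, hexp, one_mul]; exact hb0 y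
    · rw [one_mul]; exact ENNReal.toReal_le_of_le_ofReal hδ.le hTv
  by_cases hxx : x = x'
  · subst hxx
    simp only [sub_self, mul_zero]
    norm_num
    linarith
  set N := |lam| * μ * |τ| * |x - x'| with hN
  have hNpos : 0 < N := by
    have : x - x' ≠ 0 := sub_ne_zero.2 hxx
    positivity
  have hyd : ∀ (f : ℝ × ℝ → ℝ), ContDiff ℝ (⊤ : ℕ∞) f → ∀ c e y : ℝ,
      HasDerivAt (fun y => f (c, y + e)) (pdy f (c, y + e)) y := by
    intro f hf c e y
    have := line_deriv hf c 0 e 1 y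
    simpa [add_comm] using this
  have hyd0 : ∀ (f : ℝ × ℝ → ℝ), ContDiff ℝ (⊤ : ℕ∞) f → ∀ c y : ℝ,
      HasDerivAt (fun y => f (c, y)) (pdy f (c, y)) y := by
    intro f hf c y
    simpa using hyd f hf c 0 y
  have h4 : ∀ (f : ℝ × ℝ → ℝ), ContDiff ℝ (⊤ : ℕ∞) f → ∀ y,
      HasDerivAt (fun y => lam * (f (x, y) - f (x - τ, y + τ) - f (x', y) + f (x' - τ, y + τ)))
      (lam * (pdy f (x, y) - pdy f (x - τ, y + τ) - pdy f (x', y) + pdy f (x' - τ, y + τ))) y := by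
    intro f hf y
    exact ((((hyd0 f hf x y).sub (hyd f hf (x - τ) τ y)).sub (hyd0 f hf x' y)).add
      (hyd f hf (x' - τ) τ y)).const_mul lam
  have hCd0 : ∀ (f : ℝ × ℝ → ℂ), ContDiff ℝ (⊤ : ℕ∞) f → ∀ c y : ℝ,
      HasDerivAt (fun y => f (c, y)) (pdyC f (c, y)) y := by
    intro f hf c y
    have : Differentiable ℝ (fun y => f (c, y)) :=
      (hf.differentiable (by simp)).comp (by fun_prop)
    exact (this y).hasDerivAt
  have hCd : ∀ (f : ℝ × ℝ → ℂ), ContDiff ℝ (⊤ : ℕ∞) f → ∀ c e y : ℝ,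
      HasDerivAt (fun y => f (c, y + e)) (pdyC f (c, y + e)) y := by
    intro f hf c e y
    exact (hCd0 f hf c (y + e)).comp_add_const y e
  have hs1 := pdy_smooth hS
  have hs2 := pdy_smooth hs1
  have hs3 := pdy_smooth hs2
  have ha1 := pdyC_smooth ha
  have ha2 := pdyC_smooth ha1
  have m3 := hs3.continuous
  have m2 := ha2.continuous
  have m1 := ha1.continuous
  have m0 := ha.continuous
  have hpt : ∀ (Q : ℝ × ℝ → ℝ), ContDiff ℝ (⊤ : ℕ∞) Q → ∀ y ∈ T,
      ∃ p ∈ convexHull ℝ (tsupport a),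
      |lam * (Q (x, y) - Q (x - τ, y + τ) - Q (x', y) + Q (x' - τ, y + τ))| =
        |lam| * |τ| * |x - x'| * |DQ Q p| := by
    intro Q hQ y hy
    obtain ⟨s, hs, r, hr, e⟩ := diff2 hQ x x' y τ
    refine ⟨_, hull_mem hy.1 hy.2.1 hy.2.2.1 hy.2.2.2 hs hr, ?_⟩
    rw [e]
    simp only [abs_mul]
    ring
  have eD0 := DOp_eq hS
  have eD1 : pdy (DOp S) = DQ (pdy (pdy S)) := by rw [eD0, DQ_pdy hs1]
  have eD2 : pdy (pdy (DOp S)) = DQ (pdy (pdy (pdy S))) := by rw [eD1, DQ_pdy hs2]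
  have a1' : ∀ p, ‖pdyC a p‖ ≤ 1 / δ := fun p => by rw [one_div]; exact a1 p
  have a2' : ∀ p, ‖pdyC (pdyC a) p‖ ≤ 1 ^ 2 / δ ^ 2 := fun p => by
    rw [one_pow, one_div, ← inv_pow]; exact a2 p
  have B1 := fun y => prod_bd (δ := δ) hδ zero_le_one zero_le_one (a0 (x, y)) (a1' (x, y))
    (a2' (x, y)) ((norm_star _).trans_le (a0 (x - τ, y + τ)))
    ((norm_star _).trans_le (a1' (x - τ, y + τ))) ((norm_star _).trans_le (a2' (x - τ, y + τ)))
  have B2 := fun y => prod_bd (δ := δ) hδ zero_le_one zero_le_one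
    ((norm_star _).trans_le (a0 (x', y))) ((norm_star _).trans_le (a1' (x', y)))
    ((norm_star _).trans_le (a2' (x', y))) (a0 (x' - τ, y + τ)) (a1' (x' - τ, y + τ))
    (a2' (x' - τ, y + τ))
  have B3 := fun y => prod_bd (δ := δ) hδ (by norm_num) (by norm_num) (B1 y).1 (B1 y).2.1
    (B1 y).2.2 (B2 y).1 (B2 y).2.1 (B2 y).2.2
  have main := osc_bound φ _ _ _ b
    (fun y => (pdyC a (x, y) * star (a (x - τ, y + τ)) +
        a (x, y) * star (pdyC a (x - τ, y + τ))) * (star (a (x', y)) * a (x' - τ, y + τ)) +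
      (a (x, y) * star (a (x - τ, y + τ))) * (star (pdyC a (x', y)) * a (x' - τ, y + τ) +
        star (a (x', y)) * pdyC a (x' - τ, y + τ)))
    (fun y =>
      (((pdyC (pdyC a) (x, y) * star (a (x - τ, y + τ)) +
          pdyC a (x, y) * star (pdyC a (x - τ, y + τ))) +
        (pdyC a (x, y) * star (pdyC a (x - τ, y + τ)) +
          a (x, y) * star (pdyC (pdyC a) (x - τ, y + τ)))) *
          (star (a (x', y)) * a (x' - τ, y + τ)) +
        (pdyC a (x, y) * star (a (x - τ, y + τ)) + a (x, y) * star (pdyC a (x - τ, y + τ))) *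
          (star (pdyC a (x', y)) * a (x' - τ, y + τ) +
            star (a (x', y)) * pdyC a (x' - τ, y + τ))) +
      ((pdyC a (x, y) * star (a (x - τ, y + τ)) + a (x, y) * star (pdyC a (x - τ, y + τ))) *
          (star (pdyC a (x', y)) * a (x' - τ, y + τ) +
            star (a (x', y)) * pdyC a (x' - τ, y + τ)) +
        (a (x, y) * star (a (x - τ, y + τ))) *
        ((star (pdyC (pdyC a) (x', y)) * a (x' - τ, y + τ) +
          star (pdyC a (x', y)) * pdyC a (x' - τ, y + τ)) +
        (star (pdyC a (x', y)) * pdyC a (x' - τ, y + τ) +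
          star (a (x', y)) * pdyC (pdyC a) (x' - τ, y + τ)))))
    T hT N δ hδ hNpos hTv (h4 S hS) (h4 _ hs1) (h4 _ hs2) (by fun_prop)
    ?_
    (fun y => ((hCd0 a ha x y).mul (hCd a ha (x - τ) τ y).star).mul
      ((hCd0 a ha x' y).star.mul (hCd a ha (x' - τ) τ y)))
    (fun y => ((((hCd0 _ ha1 x y).mul (hCd a ha (x - τ) τ y).star).add
      ((hCd0 a ha x y).mul (hCd _ ha1 (x - τ) τ y).star)).mul
      ((hCd0 a ha x' y).star.mul (hCd a ha (x' - τ) τ y))).add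
      (((hCd0 a ha x y).mul (hCd a ha (x - τ) τ y).star).mul
      (((hCd0 _ ha1 x' y).star.mul (hCd a ha (x' - τ) τ y)).add
      ((hCd0 a ha x' y).star.mul (hCd _ ha1 (x' - τ) τ y)))))
    hoff ?_ ?_ ?_ (fun y _ => (B3 y).1) (fun y _ => (B3 y).2.1.trans_eq (by norm_num))
    (fun y _ => (B3 y).2.2.trans_eq (by norm_num))
  · set u := δ * N with hu
    have hu2 : (δ * (|lam| * μ * |τ|) * (x - x')) ^ 2 = u ^ 2 := by
      rw [hu, hN, ← sq_abs]
      simp only [abs_mul, abs_abs, abs_of_pos hδ, abs_of_pos hμ]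
      ring
    rw [hu2]
    have hupos : 0 < u := by positivity
    rw [← div_eq_mul_inv]
    by_cases h32 : u ^ 2 ≤ 32
    · refine triv.trans ?_
      rw [le_div_iff₀ (by positivity)]
      nlinarith
    · refine main.trans ?_
      rw [div_le_div_iff₀ (by positivity) (by positivity)]
      push Not at h32
      nlinarith
  · have : Continuous (star : ℂ → ℂ) := continuous_star
    apply Continuous.measurable
    fun_prop
  · intro y hy
    obtain ⟨p, hp, e⟩ := hpt _ hs1 y hy
    rw [e, ← eD0, hN]
    have := (hD p hp).1
    calc |lam| * μ * |τ| * |x - x'| = |lam| * |τ| * |x - x'| * μ := by ring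
      _ ≤ _ := by gcongr
  · intro y hy
    obtain ⟨p, hp, e⟩ := hpt _ hs2 y hy
    rw [e, ← eD1, hN]
    have := (hD p hp).2.1
    calc _ ≤ |lam| * |τ| * |x - x'| * (μ * δ⁻¹) := by gcongr
      _ = _ := by ring
  · intro y hy
    obtain ⟨p, hp, e⟩ := hpt _ hs3 y hy
    rw [e, ← eD2, hN]
    have := (hD p hp).2.2
    calc _ ≤ |lam| * |τ| * |x - x'| * (μ * δ⁻¹ ^ 2) := by gcongr
      _ = _ := by ring

end kernel

section measure

open scoped ENNReal

lemma cs_sq {α : Type*} [MeasurableSpace α] (ν : Measure α) {f g : α → ℝ≥0∞}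
    (hf : Measurable f) (hg : Measurable g) :
    (∫⁻ x, f x * g x ∂ν) ^ 2 ≤ (∫⁻ x, f x ^ 2 ∂ν) * ∫⁻ x, g x ^ 2 ∂ν := by
  have h := ENNReal.lintegral_mul_le_Lp_mul_Lq ν Real.HolderConjugate.two_two
    hf.aemeasurable hg.aemeasurable
  simp only [Pi.mul_apply, ENNReal.rpow_two] at h
  calc (∫⁻ x, f x * g x ∂ν) ^ 2 ≤ _ := pow_le_pow_left' h 2
    _ = _ := by
      rw [mul_pow, ← ENNReal.rpow_two, ← ENNReal.rpow_two, ← ENNReal.rpow_mul, ← ENNReal.rpow_mul]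
      norm_num

lemma corr_le {h : ℝ → ℝ≥0∞} (hh : Measurable h) (s : ℝ) :
    ∫⁻ x, h x * h (x + s) ≤ ∫⁻ x, h x ^ 2 := by
  have := cs_sq volume hh (hh.comp (measurable_add_const s))
  simp only [Function.comp_def] at this
  rw [lintegral_add_right_eq_self (fun x => h x ^ 2) s, ← sq] at this
  exact (ENNReal.pow_le_pow_left_iff two_ne_zero).1 this

lemma corr2 {h : ℝ → ℝ≥0∞} (hh : Measurable h) (e : ℝ → ℝ → ℝ)
    (he : Measurable (Function.uncurry e)) (hi : ∀ x, ∫⁻ t, h (e x t) = ∫⁻ t, h t) :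
    ∫⁻ t, ∫⁻ x, h x * h (e x t) = (∫⁻ x, h x) ^ 2 := by
  have hm : Measurable (fun q : ℝ × ℝ => h (e q.1 q.2)) := hh.comp he
  rw [lintegral_lintegral_swap]
  · have : ∀ x, ∫⁻ t, h x * h (e x t) = h x * ∫⁻ t, h t := by
      intro x
      have hx : Measurable (fun t => h (e x t)) := hm.comp measurable_prodMk_left
      rw [lintegral_const_mul _ hx, hi]
    simp only [this]
    rw [lintegral_mul_const _ hh, sq]
  · apply Measurable.aemeasurable
    exact (hh.comp measurable_snd).mul (hm.comp measurable_swap)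

lemma TT (g : ℝ → ℝ → ℂ) (hg : Measurable (Function.uncurry g)) (G : ℝ → ℂ) (hG : Measurable G)
    (hQ : Integrable (fun q : (ℝ × ℝ) × ℝ => g q.1.1 q.2 * star (g q.1.2 q.2))) :
    ‖∫ y, G y * ∫ x, g x y‖ₑ ^ 2 ≤ (∫⁻ y, ‖G y‖ₑ ^ 2) *
      ‖∫ q : (ℝ × ℝ) × ℝ, g q.1.1 q.2 * star (g q.1.2 q.2)‖ₑ := by
  set h : ℝ → ℂ := fun y => ∫ x, g x y with hh
  have hmeas : Measurable h := by
    have : StronglyMeasurable (Function.uncurry fun y x => g x y) :=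
      (hg.comp measurable_swap).stronglyMeasurable
    exact this.integral_prod_right.measurable
  have e1 : ∀ y, ∫ q : ℝ × ℝ, g q.1 y * star (g q.2 y) = ((‖h y‖ ^ 2 : ℝ) : ℂ) := by
    intro y
    have := integral_prod_mul (μ := (volume : Measure ℝ)) (ν := (volume : Measure ℝ))
      (fun x => g x y) (fun x => star (g x y))
    rw [Measure.volume_eq_prod]
    refine this.trans ?_
    have h2 : ∫ x, star (g x y) = star (h y) := integral_conj
    rw [h2, Complex.star_def, Complex.mul_conj]
    simp [Complex.normSq_eq_norm_sq, hh]
  have e2 : ∫ q : (ℝ × ℝ) × ℝ, g q.1.1 q.2 * star (g q.1.2 q.2) =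
      ∫ y, ((‖h y‖ ^ 2 : ℝ) : ℂ) := by
    rw [Measure.volume_eq_prod, integral_prod_symm _ hQ]
    simp only [e1]
  have e3 : Integrable (fun y => ((‖h y‖ ^ 2 : ℝ) : ℂ)) := by
    have := hQ.integral_prod_right
    exact this.congr (Filter.Eventually.of_forall fun y => e1 y)
  have e4 : Integrable (fun y => ‖h y‖ ^ 2) := by
    exact e3.re
  have e5 : ∫⁻ y, ‖h y‖ₑ ^ 2 = ‖∫ q : (ℝ × ℝ) × ℝ, g q.1.1 q.2 * star (g q.1.2 q.2)‖ₑ := by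
    rw [e2, integral_complex_ofReal, ← ofReal_norm (E := ℂ), Complex.norm_real,
      Real.norm_of_nonneg (by positivity),
      ofReal_integral_eq_lintegral_ofReal e4 (Filter.Eventually.of_forall fun y => by positivity)]
    congr 1
    funext y
    rw [ENNReal.ofReal_pow (norm_nonneg _), ofReal_norm]
  rw [← e5]
  refine le_trans ?_ (cs_sq volume hG.enorm hmeas.enorm)
  gcongr
  refine (enorm_integral_le_lintegral_enorm _).trans ?_
  simp only [enorm_mul]
  exact le_rfl

lemma bilin (F G : ℝ → ℂ) (hF : Measurable F) (hG : Measurable G) (hFi : Integrable F)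
    (hGi : Integrable G) (K : ℝ → ℝ → ℂ) (hK : Measurable (Function.uncurry K))
    (J : Set ℝ) (hJm : MeasurableSet J) (hJ : volume J < ⊤)
    (hK1 : ∀ x y, ‖K x y‖ ≤ 1) (hK0 : ∀ x y, y ∉ J → K x y = 0)
    (κ : ℝ → ℝ≥0∞) (hκ : Measurable κ)
    (hker : ∀ x x', ‖∫ y, K x y * star (K x' y)‖ₑ ≤ κ (x - x')) :
    ‖∫ p : ℝ × ℝ, F p.1 * G p.2 * K p.1 p.2‖ₑ ^ 2 ≤
      (∫⁻ s, κ s) * (∫⁻ x, ‖F x‖ₑ ^ 2) * ∫⁻ y, ‖G y‖ₑ ^ 2 := by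
  have hKu : Measurable (fun p : ℝ × ℝ => K p.1 p.2) := hK
  have i1 : Integrable (fun p : ℝ × ℝ => F p.1 * G p.2 * K p.1 p.2) := by
    refine (hFi.mul_prod hGi).mono ?_ ?_
    · exact (((hF.comp measurable_fst).mul (hG.comp measurable_snd)).mul hKu).aestronglyMeasurable
    · refine Filter.Eventually.of_forall fun p => ?_
      rw [norm_mul]
      exact mul_le_of_le_one_right (norm_nonneg _) (hK1 _ _)
  have e1 : ∫ p : ℝ × ℝ, F p.1 * G p.2 * K p.1 p.2 = ∫ y, G y * ∫ x, F x * K x y := by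
    rw [Measure.volume_eq_prod, integral_prod_symm _ i1]
    congr 1
    funext y
    rw [← integral_const_mul]
    congr 1
    funext x
    ring
  have hmQ : Measurable (fun q : (ℝ × ℝ) × ℝ => F q.1.1 * K q.1.1 q.2 *
      star (F q.1.2 * K q.1.2 q.2)) := by
    have k1 : Measurable (fun q : (ℝ × ℝ) × ℝ => K q.1.1 q.2) :=
      hKu.comp (by fun_prop : Measurable fun q : (ℝ × ℝ) × ℝ => (q.1.1, q.2))
    have k2 : Measurable (fun q : (ℝ × ℝ) × ℝ => K q.1.2 q.2) :=
      hKu.comp (by fun_prop : Measurable fun q : (ℝ × ℝ) × ℝ => (q.1.2, q.2))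
    have hst : Measurable (star : ℂ → ℂ) := continuous_star.measurable
    exact ((hF.comp (measurable_fst.comp measurable_fst)).mul k1).mul
      (hst.comp ((hF.comp (measurable_snd.comp measurable_fst)).mul k2))
  have hQ : Integrable (fun q : (ℝ × ℝ) × ℝ => F q.1.1 * K q.1.1 q.2 *
      star (F q.1.2 * K q.1.2 q.2)) := by
    have hind : Integrable (J.indicator (fun _ => (1:ℂ))) :=
      (integrable_indicator_iff hJm).2 (integrableOn_const hJ.ne)
    refine ((hFi.mul_prod hFi).mul_prod hind).mono hmQ.aestronglyMeasurable ?_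
    refine Filter.Eventually.of_forall fun q => ?_
    by_cases hq : q.2 ∈ J
    · simp only [norm_mul, norm_star, Set.indicator_of_mem hq, mul_one]
      have := hK1 q.1.1 q.2
      have := hK1 q.1.2 q.2
      calc ‖F q.1.1‖ * ‖K q.1.1 q.2‖ * (‖F q.1.2‖ * ‖K q.1.2 q.2‖)
          ≤ ‖F q.1.1‖ * 1 * (‖F q.1.2‖ * 1) := by gcongr
        _ = _ := by ring
    · simp only [hK0 _ _ hq, mul_zero, star_zero, norm_zero]
      exact norm_nonneg _
  have hm : Measurable (Function.uncurry fun x y => F x * K x y) :=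
    (hF.comp measurable_fst).mul hKu
  rw [e1]
  refine (TT (fun x y => F x * K x y) hm G hG hQ).trans ?_
  rw [mul_comm]
  gcongr
  rw [Measure.volume_eq_prod, integral_prod _ hQ]
  refine (enorm_integral_le_lintegral_enorm _).trans ?_
  have e2 : ∀ p : ℝ × ℝ, ‖∫ y, F p.1 * K p.1 y * star (F p.2 * K p.2 y)‖ₑ ≤
      ‖F p.1‖ₑ * ‖F p.2‖ₑ * κ (p.1 - p.2) := by
    intro p
    have : ∀ y, F p.1 * K p.1 y * star (F p.2 * K p.2 y) =
        (F p.1 * star (F p.2)) * (K p.1 y * star (K p.2 y)) := by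
      intro y; rw [star_mul']; ring
    simp only [this]
    rw [integral_const_mul, enorm_mul, enorm_mul]
    have h3 : ‖star (F p.2)‖ₑ = ‖F p.2‖ₑ := by
      rw [← ofReal_norm, norm_star, ofReal_norm]
    rw [h3]
    gcongr
    exact hker _ _
  refine (lintegral_mono e2).trans ?_
  have hFe := hF.enorm
  rw [Measure.volume_eq_prod, lintegral_prod_symm _ (by fun_prop)]
  calc ∫⁻ x', ∫⁻ x, ‖F x‖ₑ * ‖F x'‖ₑ * κ (x - x')
      = ∫⁻ x', ∫⁻ s, ‖F (x' + s)‖ₑ * ‖F x'‖ₑ * κ s := by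
        congr 1
        funext x'
        rw [← lintegral_add_left_eq_self _ x']
        simp
    _ = ∫⁻ s, ∫⁻ x', ‖F (x' + s)‖ₑ * ‖F x'‖ₑ * κ s := by
        rw [lintegral_lintegral_swap]
        apply Measurable.aemeasurable
        unfold Function.uncurry
        fun_prop
    _ ≤ ∫⁻ s, κ s * ∫⁻ x, ‖F x‖ₑ ^ 2 := by
        refine lintegral_mono fun s => ?_
        calc ∫⁻ x', ‖F (x' + s)‖ₑ * ‖F x'‖ₑ * κ s = (∫⁻ x', ‖F x'‖ₑ * ‖F (x' + s)‖ₑ) * κ s := by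
              rw [← lintegral_mul_const _ (by fun_prop)]
              congr 1; funext x'; ring
          _ ≤ (∫⁻ x', ‖F x'‖ₑ ^ 2) * κ s := by
              exact mul_le_mul_left (corr_le hFe s) _
          _ = _ := mul_comm _ _
    _ = _ := by rw [lintegral_mul_const _ hκ]

lemma kappa_int (δ M : ℝ) (hδ : 0 < δ) (hM : 0 < M) :
    ∫⁻ s : ℝ, ENNReal.ofReal (33 * δ * (1 + (δ * M * s) ^ 2)⁻¹) =
      ENNReal.ofReal (33 * Real.pi / M) := by
  have hne : δ * M ≠ 0 := by positivity
  have hi : Integrable (fun s : ℝ => 33 * δ * (1 + (δ * M * s) ^ 2)⁻¹) :=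
    (integrable_inv_one_add_sq.comp_mul_left' hne).const_mul _
  rw [← ofReal_integral_eq_lintegral_ofReal hi
    (Filter.Eventually.of_forall fun s => by positivity)]
  congr 1
  rw [integral_const_mul, Measure.integral_comp_mul_left (fun x => (1 + x ^ 2)⁻¹) (δ * M),
    integral_univ_inv_one_add_sq, abs_of_pos (by positivity)]
  simp only [smul_eq_mul]
  field_simp

lemma mp_shear : MeasurePreserving (fun q : ℝ × (ℝ × ℝ) => ((q.2.2, q.2.2 + q.1), q.2.1 + q.2.2))
    (volume : Measure (ℝ × (ℝ × ℝ))) (volume : Measure ((ℝ × ℝ) × ℝ)) := by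
  have h1 : MeasurePreserving (fun p : (ℝ × ℝ) × ℝ => ((p.1.1, p.1.1 + p.1.2), p.2 + p.1.1))
      (volume : Measure ((ℝ × ℝ) × ℝ)) (volume : Measure ((ℝ × ℝ) × ℝ)) := by
    refine MeasurePreserving.skew_product (f := fun z : ℝ × ℝ => (z.1, z.1 + z.2))
      (g := fun z x => x + z.1) (measurePreserving_prod_add volume volume) ?_ ?_
    · unfold Function.uncurry; fun_prop
    · exact Filter.Eventually.of_forall fun z => map_add_right_eq_self volume z.1
  -- (τ,(x,y)) → ((x,y),τ) → (x,(y,τ)) → ((y,τ),x)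
  have s1 : MeasurePreserving (Prod.swap : ℝ × (ℝ × ℝ) → (ℝ × ℝ) × ℝ) volume volume :=
    Measure.measurePreserving_swap
  have s2 : MeasurePreserving (MeasurableEquiv.prodAssoc : (ℝ × ℝ) × ℝ ≃ᵐ ℝ × (ℝ × ℝ))
    volume volume := measurePreserving_prodAssoc volume volume volume
  exact h1.comp (s1.comp (s2.comp s1))

end measure

section main

open scoped ENNReal

lemma enorm_star' (z : ℂ) : ‖star z‖ₑ = ‖z‖ₑ := by
  rw [← ofReal_norm, norm_star, ofReal_norm]

lemma tri (F1 F2 F3 : ℝ → ℂ) (h1 : Measurable F1) (h2 : Measurable F2) (h3 : Measurable F3)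
    (hF1 : Integrable F1) (n1fin : ∫⁻ x, ‖F1 x‖ₑ ^ 2 < ⊤) (n2fin : ∫⁻ x, ‖F2 x‖ₑ ^ 2 < ⊤)
    (k : ℝ × ℝ → ℂ) (hk : Continuous k) (hk1 : ∀ p, ‖k p‖ ≤ 1)
    (J : Set ℝ) (hJm : MeasurableSet J) (hJ : volume J < ⊤) (hkJ : ∀ p : ℝ × ℝ, p.2 ∉ J → k p = 0)
    (δ m : ℝ) (hδ : 0 < δ) (hm : 0 < m)
    (hker : ∀ τ, τ ≠ 0 → ∀ x x' : ℝ,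
      ‖∫ y, (k (x, y) * star (k (x - τ, y + τ))) * star (k (x', y) * star (k (x' - τ, y + τ)))‖
      ≤ 33 * δ * (1 + (δ * (m * |τ|) * (x - x')) ^ 2)⁻¹) (τ0 : ℝ) (hτ0 : 0 < τ0) :
    ‖∫ p : ℝ × ℝ, F1 p.1 * F2 p.2 * F3 (p.1 + p.2) * k p‖ₑ ^ 2 ≤
      (∫⁻ x, ‖F3 x‖ₑ ^ 2) * ((∫⁻ x, ‖F1 x‖ₑ ^ 2) * (∫⁻ x, ‖F2 x‖ₑ ^ 2) *
        (ENNReal.ofReal (2 * τ0) + ENNReal.ofReal (33 * Real.pi / (m * τ0)) ^ (1 / 2 : ℝ))) := by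
  have hst : Measurable (star : ℂ → ℂ) := continuous_star.measurable
  have hkm := hk.measurable
  set n1 := ∫⁻ x, ‖F1 x‖ₑ ^ 2 with hn1
  set n2 := ∫⁻ x, ‖F2 x‖ₑ ^ 2 with hn2
  set n3 := ∫⁻ x, ‖F3 x‖ₑ ^ 2 with hn3
  by_cases hint : Integrable (fun p : ℝ × ℝ => F1 p.1 * F2 p.2 * F3 (p.1 + p.2) * k p)
  swap
  · rw [integral_undef hint]; simp
  set g : ℝ → ℝ → ℂ := fun y t => F1 (t - y) * F2 y * k (t - y, y) with hg
  have hgm : Measurable (Function.uncurry g) := by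
    simp only [hg, Function.uncurry_def]
    fun_prop
  -- change of variables t = x + y
  have hmp : MeasurePreserving (fun z : ℝ × ℝ => (-z.2 + z.1, z.2)) volume volume :=
    (Measure.measurePreserving_swap (μ := (volume : Measure ℝ)) (ν := (volume : Measure ℝ))).comp
      (measurePreserving_prod_neg_add_swap (volume : Measure ℝ) (volume : Measure ℝ))
  have hΦm : Measurable (fun p : ℝ × ℝ => F1 p.1 * F2 p.2 * F3 (p.1 + p.2) * k p) := by
    fun_prop
  have eΛ : ∫ p : ℝ × ℝ, F1 p.1 * F2 p.2 * F3 (p.1 + p.2) * k p = ∫ t, F3 t * ∫ y, g y t := by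
    have c1 := integral_map (μ := (volume : Measure (ℝ × ℝ))) hmp.measurable.aemeasurable
      (f := fun p : ℝ × ℝ => F1 p.1 * F2 p.2 * F3 (p.1 + p.2) * k p)
      hΦm.aestronglyMeasurable
    rw [hmp.map_eq] at c1
    have c2 : Integrable ((fun p : ℝ × ℝ => F1 p.1 * F2 p.2 * F3 (p.1 + p.2) * k p) ∘
        (fun z : ℝ × ℝ => (-z.2 + z.1, z.2))) :=
      (hmp.integrable_comp hΦm.aestronglyMeasurable).2 hint
    rw [c1]
    refine (integral_prod _ c2).trans ?_
    congr 1
    funext t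
    rw [← integral_const_mul]
    congr 1
    funext y
    have r1 : -y + t = t - y := by ring
    have r2 : t - y + y = t := by ring
    simp only [Function.comp_apply, hg, r1, r2]
    ring
  -- pieces
  set Fτ : ℝ → ℝ → ℂ := fun τ x => F1 x * star (F1 (x - τ)) with hFτ
  set Gτ : ℝ → ℝ → ℂ := fun τ y => F2 y * star (F2 (y + τ)) with hGτ
  set Kτ : ℝ → ℝ → ℝ → ℂ := fun τ x y => k (x, y) * star (k (x - τ, y + τ)) with hKτ
  set Q : (ℝ × ℝ) × ℝ → ℂ := fun q => g q.1.1 q.2 * star (g q.1.2 q.2) with hQdef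
  set R : ℝ × (ℝ × ℝ) → ℂ := fun q => Fτ q.1 q.2.1 * Gτ q.1 q.2.2 * Kτ q.1 q.2.1 q.2.2 with hR
  have hKm : ∀ τ, Measurable (Function.uncurry (Kτ τ)) := by
    intro τ
    simp only [hKτ, Function.uncurry_def]
    fun_prop
  have hFm : ∀ τ, Measurable (Fτ τ) := by intro τ; simp only [hFτ]; fun_prop
  have hGm : ∀ τ, Measurable (Gτ τ) := by intro τ; simp only [hGτ]; fun_prop
  have hRm : Measurable R := by
    simp only [hR, hFτ, hGτ, hKτ]
    fun_prop
  have hQm : Measurable Q := by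
    simp only [hQdef, hg]
    fun_prop
  have hQR : Q ∘ (fun q : ℝ × (ℝ × ℝ) => ((q.2.2, q.2.2 + q.1), q.2.1 + q.2.2)) = R := by
    funext q
    have r1 : q.2.1 + q.2.2 - q.2.2 = q.2.1 := by ring
    have r2 : q.2.1 + q.2.2 - (q.2.2 + q.1) = q.2.1 - q.1 := by ring
    simp only [Function.comp_apply, hQdef, hg, hR, hFτ, hGτ, hKτ, r1, r2, star_mul']
    ring
  have eF : ∀ τ, ∫⁻ x, ‖Fτ τ x‖ₑ = ∫⁻ x, ‖F1 x‖ₑ * ‖F1 (x - τ)‖ₑ := by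
    intro τ; simp only [hFτ, enorm_mul, enorm_star']
  have eG : ∀ τ, ∫⁻ x, ‖Gτ τ x‖ₑ = ∫⁻ x, ‖F2 x‖ₑ * ‖F2 (x + τ)‖ₑ := by
    intro τ; simp only [hGτ, enorm_mul, enorm_star']
  have bF : ∀ τ, ∫⁻ x, ‖Fτ τ x‖ₑ ≤ n1 := by
    intro τ; rw [eF]
    exact corr_le h1.enorm (-τ)
  have bG : ∀ τ, ∫⁻ x, ‖Gτ τ x‖ₑ ≤ n2 := by
    intro τ; rw [eG]
    exact corr_le h2.enorm τ
  have iF : ∀ τ, Integrable (Fτ τ) := fun τ =>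
    ⟨(hFm τ).aestronglyMeasurable, (bF τ).trans_lt n1fin⟩
  have iG : ∀ τ, Integrable (Gτ τ) := fun τ =>
    ⟨(hGm τ).aestronglyMeasurable, (bG τ).trans_lt n2fin⟩
  have hK1 : ∀ τ x y, ‖Kτ τ x y‖ ≤ 1 := by
    intro τ x y
    simp only [hKτ, norm_mul, norm_star]
    exact mul_le_one₀ (hk1 _) (norm_nonneg _) (hk1 _)
  have hP : ∀ τ, ∫⁻ p : ℝ × ℝ, ‖R (τ, p)‖ₑ ≤ (∫⁻ x, ‖Fτ τ x‖ₑ) * ∫⁻ x, ‖Gτ τ x‖ₑ := by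
    intro τ
    rw [← lintegral_prod_mul (hFm τ).enorm.aemeasurable (hGm τ).enorm.aemeasurable,
      ← Measure.volume_eq_prod]
    refine lintegral_mono fun p => ?_
    simp only [hR, enorm_mul (Fτ τ p.1 * Gτ τ p.2), enorm_mul (Fτ τ p.1)]
    refine mul_le_of_le_one_right' ?_
    rw [← ofReal_norm]
    exact ENNReal.ofReal_le_one.2 (hK1 _ _ _)
  have hRint : Integrable R := by
    refine ⟨hRm.aestronglyMeasurable, ?_⟩
    rw [hasFiniteIntegral_iff_enorm, Measure.volume_eq_prod, lintegral_prod _ hRm.enorm.aemeasurable]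
    calc ∫⁻ τ, ∫⁻ p : ℝ × ℝ, ‖R (τ, p)‖ₑ
        ≤ ∫⁻ τ, (∫⁻ x, ‖F1 x‖ₑ * ‖F1 (x - τ)‖ₑ) * n2 := by
          refine lintegral_mono fun τ => (hP τ).trans ?_
          rw [eF]
          exact mul_le_mul_right (bG τ) _
      _ = (∫⁻ x, ‖F1 x‖ₑ) ^ 2 * n2 := by
          rw [lintegral_mul_const' _ _ n2fin.ne,
            corr2 h1.enorm (fun x t => x - t) (by unfold Function.uncurry; fun_prop)
              (fun x => lintegral_sub_left_eq_self (fun t => ‖F1 t‖ₑ) x)]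
      _ < ⊤ := ENNReal.mul_lt_top (ENNReal.pow_lt_top hF1.2) n2fin
  have hQint : Integrable Q := by
    rw [← mp_shear.integrable_comp hQm.aestronglyMeasurable, hQR]
    exact hRint
  have eQR : ∫ q, Q q = ∫ q, R q := by
    have c1 := integral_map (μ := (volume : Measure (ℝ × (ℝ × ℝ)))) mp_shear.measurable.aemeasurable
      (f := Q) hQm.aestronglyMeasurable
    rw [mp_shear.map_eq] at c1
    rw [c1, ← hQR]
    rfl
  rw [eΛ]
  refine (TT g hgm F3 h3 hQint).trans ?_
  gcongr
  rw [eQR, Measure.volume_eq_prod, integral_prod _ hRint]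
  refine (enorm_integral_le_lintegral_enorm _).trans ?_
  -- bounds for each τ
  set P : ℝ → ℝ≥0∞ := fun τ => ∫⁻ x, ‖Fτ τ x‖ₑ ^ 2 with hPdef
  set P' : ℝ → ℝ≥0∞ := fun τ => ∫⁻ x, ‖Gτ τ x‖ₑ ^ 2 with hP'def
  have hPm : Measurable P := by
    have : Measurable (fun q : ℝ × ℝ => ‖Fτ q.1 q.2‖ₑ ^ 2) := by
      simp only [hFτ]; fun_prop
    exact this.lintegral_prod_right'
  have hP'm : Measurable P' := by
    have : Measurable (fun q : ℝ × ℝ => ‖Gτ q.1 q.2‖ₑ ^ 2) := by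
      simp only [hGτ]; fun_prop
    exact this.lintegral_prod_right'
  have hPint : ∫⁻ τ, P τ = n1 ^ 2 := by
    simp only [hPdef, hFτ, enorm_mul, enorm_star', mul_pow]
    exact corr2 (h := fun x => ‖F1 x‖ₑ ^ 2) (h1.enorm.pow_const 2) (fun x t => x - t)
      (by unfold Function.uncurry; fun_prop)
      (fun x => lintegral_sub_left_eq_self (fun t => ‖F1 t‖ₑ ^ 2) x)
  have hP'int : ∫⁻ τ, P' τ = n2 ^ 2 := by
    simp only [hP'def, hGτ, enorm_mul, enorm_star', mul_pow]
    exact corr2 (h := fun x => ‖F2 x‖ₑ ^ 2) (h2.enorm.pow_const 2) (fun x t => x + t)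
      (by unfold Function.uncurry; fun_prop)
      (fun x => lintegral_add_left_eq_self (fun t => ‖F2 t‖ₑ ^ 2) x)
  set c0 := ENNReal.ofReal (33 * Real.pi / (m * τ0)) with hc0
  have sqrt_sq : ∀ z : ℝ≥0∞, (z ^ (1 / 2 : ℝ)) ^ 2 = z := by
    intro z
    rw [← ENNReal.rpow_two, ← ENNReal.rpow_mul]; norm_num
  have big : ∀ τ, τ0 < |τ| → ‖∫ p : ℝ × ℝ, R (τ, p)‖ₑ ≤
      c0 ^ (1 / 2 : ℝ) * (P τ ^ (1 / 2 : ℝ) * P' τ ^ (1 / 2 : ℝ)) := by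
    intro τ hτ
    have hτpos : 0 < |τ| := hτ0.trans hτ
    have hb := bilin (Fτ τ) (Gτ τ) (hFm τ) (hGm τ) (iF τ) (iG τ) (Kτ τ) (hKm τ) J hJm hJ (hK1 τ)
      (fun x y hy => by simp only [hKτ, hkJ (x, y) hy, zero_mul])
      (fun s => ENNReal.ofReal (33 * δ * (1 + (δ * (m * |τ|) * s) ^ 2)⁻¹)) (by fun_prop)
      (fun x x' => by
        rw [← ofReal_norm]
        exact ENNReal.ofReal_le_ofReal (hker τ (abs_pos.1 hτpos) x x'))
    rw [kappa_int δ (m * |τ|) hδ (by positivity)] at hb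
    rw [← ENNReal.pow_le_pow_left_iff two_ne_zero, mul_pow, mul_pow, sqrt_sq, sqrt_sq, sqrt_sq]
    refine hb.trans ?_
    rw [mul_assoc]
    refine mul_le_mul_left (ENNReal.ofReal_le_ofReal ?_) _
    have := Real.pi_pos
    gcongr
  have small : ∀ τ, ‖∫ p : ℝ × ℝ, R (τ, p)‖ₑ ≤ n1 * n2 := fun τ =>
    ((enorm_integral_le_lintegral_enorm _).trans (hP τ)).trans (mul_le_mul' (bF τ) (bG τ))
  calc ∫⁻ τ, ‖∫ p : ℝ × ℝ, R (τ, p)‖ₑ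
      ≤ ∫⁻ τ, ((Set.Icc (-τ0) τ0).indicator (fun _ => n1 * n2) τ +
        c0 ^ (1 / 2 : ℝ) * (P τ ^ (1 / 2 : ℝ) * P' τ ^ (1 / 2 : ℝ))) := by
        refine lintegral_mono fun τ => ?_
        by_cases hτ : τ ∈ Set.Icc (-τ0) τ0
        · simp only [Set.indicator_of_mem hτ]
          exact (small τ).trans le_self_add
        · refine (big τ ?_).trans le_add_self
          by_contra hcon
          push Not at hcon
          exact hτ (abs_le.1 hcon)
    _ = n1 * n2 * ENNReal.ofReal (2 * τ0) +
        c0 ^ (1 / 2 : ℝ) * ∫⁻ τ, P τ ^ (1 / 2 : ℝ) * P' τ ^ (1 / 2 : ℝ) := by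
        rw [lintegral_add_left (measurable_const.indicator measurableSet_Icc),
          lintegral_indicator_const measurableSet_Icc, Real.volume_Icc,
          lintegral_const_mul _ (by fun_prop)]
        congr 3
        ring
    _ ≤ n1 * n2 * ENNReal.ofReal (2 * τ0) + c0 ^ (1 / 2 : ℝ) * (n1 * n2) := by
        gcongr
        have := cs_sq volume (hPm.pow_const (1 / 2 : ℝ)) (hP'm.pow_const (1 / 2 : ℝ))
        simp only [sqrt_sq, hPint, hP'int, ← mul_pow] at this
        exact (ENNReal.pow_le_pow_left_iff two_ne_zero).1 this
    _ = _ := by ring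

end main

/-- Trilinear analogue of the Phong–Stein operator van der Corput
lemma (Theorem `local` of the paper). -/
theorem trilinear_van_der_corput :
    ∃ C : ℝ, ∀ δ₁ δ₂ μ lam : ℝ, 0 < δ₁ → δ₁ ≤ 1 → 0 < δ₂ → δ₂ ≤ 1 → 0 < μ → lam ≠ 0 →
      ∀ (a : ℝ × ℝ → ℂ) (I J : Set ℝ), I.OrdConnected → J.OrdConnected →
        volume I ≤ ENNReal.ofReal δ₁ → volume J ≤ ENNReal.ofReal δ₂ →
        ContDiff ℝ (⊤ : ℕ∞) a → tsupport a ⊆ I ×ˢ J →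
        (∀ p : ℝ × ℝ, ‖a p‖ ≤ 1) →
        (∀ p : ℝ × ℝ, ‖pdyC a p‖ ≤ δ₂⁻¹) →
        (∀ p : ℝ × ℝ, ‖pdyC (pdyC a) p‖ ≤ δ₂⁻¹ ^ 2) →
        ∀ S : ℝ × ℝ → ℝ, ContDiff ℝ (⊤ : ℕ∞) S →
        (∀ p ∈ convexHull ℝ (tsupport a),
          μ ≤ |DOp S p| ∧ |pdy (DOp S) p| ≤ μ * δ₂⁻¹ ∧
            |pdy (pdy (DOp S)) p| ≤ μ * δ₂⁻¹ ^ 2) →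
        ∀ f₁ f₂ f₃ : Lp ℂ 2 (volume : Measure ℝ),
          ‖∫ p : ℝ × ℝ, Complex.exp (Complex.I * lam * S p) *
              f₁ p.1 * f₂ p.2 * f₃ (p.1 + p.2) * a p‖ ≤
            C * |lam * μ| ^ (-(1 / 6) : ℝ) * ‖f₁‖ * ‖f₂‖ * ‖f₃‖ := by
  refine ⟨Real.sqrt (2 + Real.sqrt (33 * Real.pi)), ?_⟩
  intro δ₁ δ₂ μ lam hδ₁ _ hδ₂ _ hμ hlam a I J hI hJ hIv hJv ha hsupp a0 a1 a2 S hS hD f₁ f₂ f₃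
  have hIfin : volume I < ⊤ := hIv.trans_lt ENNReal.ofReal_lt_top
  have hJfin : volume J < ⊤ := hJv.trans_lt ENNReal.ofReal_lt_top
  set k : ℝ × ℝ → ℂ := fun p => Complex.exp (Complex.I * lam * S p) * a p with hk
  have hkc : Continuous k := by
    have := hS.continuous
    have := ha.continuous
    simp only [hk]
    fun_prop
  have hk1 : ∀ p, ‖k p‖ ≤ 1 := by
    intro p
    have : Complex.I * lam * S p = ((lam * S p : ℝ) : ℂ) * Complex.I := by push_cast; ring
    simp only [hk, norm_mul, this, Complex.norm_exp_ofReal_mul_I, one_mul]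
    exact a0 p
  have ha0 : ∀ p : ℝ × ℝ, ¬ (p.1 ∈ I ∧ p.2 ∈ J) → a p = 0 := by
    intro p hp
    exact image_eq_zero_of_notMem_tsupport fun h => hp ⟨(hsupp h).1, (hsupp h).2⟩
  have hmf : ∀ f : Lp ℂ 2 (volume : Measure ℝ), Measurable f := fun f =>
    (Lp.stronglyMeasurable f).measurable
  have hnorm : ∀ f : Lp ℂ 2 (volume : Measure ℝ), ∫⁻ x, ‖f x‖ₑ ^ 2 = ENNReal.ofReal (‖f‖ ^ 2) := by
    intro f
    have h := eLpNorm_nnreal_pow_eq_lintegral (μ := (volume : Measure ℝ)) (f := f) (p := 2)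
      two_ne_zero
    rw [ENNReal.ofReal_pow (norm_nonneg _), ofReal_norm, Lp.enorm_def]
    simpa using h.symm
  set F1 : ℝ → ℂ := I.indicator f₁ with hF1
  have hF1m : Measurable F1 := (hmf f₁).indicator hI.measurableSet
  have hF1i : Integrable F1 := by
    rw [hF1, integrable_indicator_iff hI.measurableSet]
    have : IsFiniteMeasure ((volume : Measure ℝ).restrict I) := ⟨by simpa using hIfin⟩
    exact ((Lp.memLp f₁).restrict I).integrable (by norm_num)
  have hF1n : ∫⁻ x, ‖F1 x‖ₑ ^ 2 ≤ ENNReal.ofReal (‖f₁‖ ^ 2) := by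
    rw [← hnorm]
    refine lintegral_mono fun x => ?_
    gcongr
    exact enorm_indicator_le_enorm_self _ _
  have hmpos : 0 < |lam| * μ := mul_pos (abs_pos.2 hlam) hμ
  set m := |lam| * μ with hm
  have hmabs : |lam * μ| = m := by rw [abs_mul, abs_of_pos hμ]
  set τ0 := m ^ (-(1 / 3) : ℝ) with hτ0
  have hτ0pos : 0 < τ0 := Real.rpow_pos_of_pos hmpos _
  have key := tri F1 f₂ f₃ hF1m (hmf f₂) (hmf f₃) hF1i (hF1n.trans_lt ENNReal.ofReal_lt_top)
    (by rw [hnorm]; exact ENNReal.ofReal_lt_top) k hkc hk1 J hJ.measurableSet hJfin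
    (fun p hp => by simp only [hk, ha0 p (fun h => hp h.2), mul_zero]) δ₂ m hδ₂ hmpos
    (fun τ hτ x x' => kernel_bound δ₂ μ lam hδ₂ hμ hlam a I J hJv ha hsupp a0 a1 a2 S hS hD k
      (fun p => rfl) τ hτ x x') τ0 hτ0pos
  have eI : ∫ p : ℝ × ℝ, Complex.exp (Complex.I * lam * S p) *
      f₁ p.1 * f₂ p.2 * f₃ (p.1 + p.2) * a p =
      ∫ p : ℝ × ℝ, F1 p.1 * f₂ p.2 * f₃ (p.1 + p.2) * k p := by
    congr 1
    funext p
    by_cases hp : p.1 ∈ I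
    · simp only [hF1, Set.indicator_of_mem hp, hk]; ring
    · simp only [hk, ha0 p (fun h => hp h.1), mul_zero]
  rw [eI, hmabs]
  set Λ := ∫ p : ℝ × ℝ, F1 p.1 * f₂ p.2 * f₃ (p.1 + p.2) * k p with hΛ
  have hsq : ENNReal.ofReal (33 * Real.pi / (m * τ0)) ^ (1 / 2 : ℝ) =
      ENNReal.ofReal (Real.sqrt (33 * Real.pi) * τ0) := by
    have hpi := Real.pi_pos
    rw [ENNReal.ofReal_rpow_of_nonneg (by positivity) (by norm_num), ← Real.sqrt_eq_rpow]
    congr 1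
    have : 33 * Real.pi / (m * τ0) = 33 * Real.pi * τ0 ^ 2 := by
      have h3 : m * τ0 ^ 3 = 1 := by
        rw [hτ0, ← Real.rpow_natCast, ← Real.rpow_mul hmpos.le]
        norm_num
        rw [Real.rpow_neg_one]
        exact mul_inv_cancel₀ hmpos.ne'
      rw [div_eq_iff (by positivity)]
      linear_combination (-33 * Real.pi) * h3
    rw [this, Real.sqrt_mul (by positivity), Real.sqrt_sq hτ0pos.le]
  rw [hsq, hnorm, hnorm, ← ENNReal.ofReal_add (by positivity) (by positivity)] at key
  have key2 : ENNReal.ofReal (‖Λ‖ ^ 2) ≤ ENNReal.ofReal (‖f₃‖ ^ 2 * (‖f₁‖ ^ 2 * ‖f₂‖ ^ 2 *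
      (2 * τ0 + Real.sqrt (33 * Real.pi) * τ0))) := by
    rw [ENNReal.ofReal_mul (by positivity), ENNReal.ofReal_mul (by positivity),
      ENNReal.ofReal_mul (by positivity), ENNReal.ofReal_pow (norm_nonneg _), ofReal_norm]
    refine key.trans ?_
    gcongr
  have key3 := (ENNReal.ofReal_le_ofReal_iff (by positivity)).1 key2
  have hr : τ0 = (m ^ (-(1 / 6) : ℝ)) ^ 2 := by
    rw [hτ0, ← Real.rpow_natCast, ← Real.rpow_mul hmpos.le]
    norm_num
  have hr0 : 0 ≤ m ^ (-(1 / 6) : ℝ) := Real.rpow_nonneg hmpos.le _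
  refine le_of_sq_le_sq ?_ (by positivity)
  refine key3.trans_eq ?_
  rw [mul_pow, mul_pow, mul_pow, mul_pow, Real.sq_sqrt (by positivity), ← hr]
  ring
end
end
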